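/- arXiv:math/0702609 — 9 statements merged into one kernel-verified Lean document; each statement's English description precedes it below -/
import Mathlib

section
/- Let f be a positive function, continuously differentiable and strictly increasing on some interval (0, u₀], which belongs to the class Γ at 0 with auxiliary function ρ(u) = f(u)/f′(u), where ρ is nondecreasing on (0, u₀] and ρ(s)/s → 0 as s → 0⁺. Then for every natural number p, as s → 0⁺, ∫₀¹ (tᵖ/√(1−t²)) · f(s√(1−t²)) dt ∼ 2^{(p−1)/2} · Γ((p+1)/2) · f(s) · (ρ(s)/s)^{(p+1)/2}, where Γ(u) = ∫₀^∞ s^{u−1} e^{−s} ds is the Gamma function and ∼ means the ratio of the two sides tends to 1. -/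
open Filter Real Set

lemma aux_bound (f ρ : ℝ → ℝ) (u₀ : ℝ)
    (hfpos : ∀ u ∈ Set.Ioc (0:ℝ) u₀, 0 < f u)
    (hfC1 : ContDiffOn ℝ 1 f (Set.Ioc 0 u₀))
    (hρdef : ∀ u ∈ Set.Ioc (0:ℝ) u₀, ρ u = f u / deriv f u)
    (hρpos : ∀ u ∈ Set.Ioc (0:ℝ) u₀, 0 < ρ u)
    (hρmono : MonotoneOn ρ (Set.Ioc 0 u₀)) (s : ℝ) (hs : 0 < s) (hsu : s < u₀)
    (h2 : ∀ u ∈ Set.Ioc (0:ℝ) s, ρ u ≤ u / 2) (u : ℝ) (hu : 0 < u) (hus : u ≤ s) :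
    f u / f s ≤ (u / s) * Real.exp (-((s - u) / (2 * ρ s))) := by
  have hmem : ∀ v ∈ Set.Ioc (0:ℝ) s, v ∈ Set.Ioc (0:ℝ) u₀ := fun v hv => ⟨hv.1, hv.2.trans hsu.le⟩
  have hsm : s ∈ Set.Ioc (0:ℝ) s := ⟨hs, le_rfl⟩
  have hd : ∀ v ∈ Set.Ioc (0:ℝ) s, HasDerivAt
      (fun v => Real.log (f v) - Real.log v - v / (2 * ρ s))
      (deriv f v / f v - 1 / v - 1 / (2 * ρ s)) v := by
    intro v hv
    have hn : Set.Ioc 0 u₀ ∈ nhds v := Ioc_mem_nhds hv.1 (hv.2.trans_lt hsu)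
    have hdf : HasDerivAt f (deriv f v) v :=
      ((hfC1.contDiffAt hn).differentiableAt (by norm_num)).hasDerivAt
    have h1 := hdf.log (hfpos v (hmem v hv)).ne'
    have h3 := (hasDerivAt_id v).log hv.1.ne'
    exact (h1.sub h3).sub ((hasDerivAt_id v).div_const _)
  have hmono : MonotoneOn (fun v => Real.log (f v) - Real.log v - v / (2 * ρ s))
      (Set.Ioc 0 s) := by
    apply monotoneOn_of_deriv_nonneg (convex_Ioc _ _)
    · exact fun v hv => (hd v hv).continuousAt.continuousWithinAt
    · rw [interior_Ioc]
      exact fun v hv => (hd v ⟨hv.1, hv.2.le⟩).differentiableAt.differentiableWithinAt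
    · rw [interior_Ioc]
      intro v hv
      have hv' : v ∈ Set.Ioc 0 s := ⟨hv.1, hv.2.le⟩
      rw [(hd v hv').deriv]
      have e : deriv f v / f v = 1 / ρ v := by
        rw [hρdef v (hmem v hv'), one_div_div]
      have p1 := hρpos v (hmem v hv')
      have p2 := hρpos s (hmem s hsm)
      have i1 : 1 / (v / 2) ≤ 1 / ρ v := one_div_le_one_div_of_le p1 (h2 v hv')
      have i2 : 1 / ρ s ≤ 1 / ρ v :=
        one_div_le_one_div_of_le p1 (hρmono (hmem v hv') (hmem s hsm) hv'.2)
      have e1 : 1 / (v / 2) = 2 * (1 / v) := by field_simp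
      have e2 : 1 / (2 * ρ s) = (1 / ρ s) / 2 := by field_simp
      rw [e, e2]; rw [e1] at i1
      linarith
  have hum : u ∈ Set.Ioc 0 s := ⟨hu, hus⟩
  have key := hmono hum hsm hus
  simp only at key
  have fu := hfpos u (hmem u hum)
  have fs := hfpos s (hmem s hsm)
  rw [← Real.exp_log (div_pos fu fs), ← Real.exp_log (div_pos hu hs), ← Real.exp_add]
  apply Real.exp_le_exp.2
  rw [Real.log_div fu.ne' fs.ne', Real.log_div hu.ne' hs.ne', sub_div]
  linarith

lemma aux_w (e y : ℝ) (h0 : 0 ≤ e) (h : e * y ^ 2 ≤ 1) :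
    1 - e * (y ^ 2 / (Real.sqrt (1 - e * y ^ 2) + 1)) = Real.sqrt (1 - e * y ^ 2) := by
  have h1 := Real.sq_sqrt (sub_nonneg.2 h)
  have h2 := Real.sqrt_nonneg (1 - e * y ^ 2)
  field_simp
  nlinarith

lemma aux_lim (f ρ : ℝ → ℝ) (u₀ : ℝ) (hu₀ : 0 < u₀)
    (hfpos : ∀ u ∈ Set.Ioc (0:ℝ) u₀, 0 < f u)
    (hfmono : StrictMonoOn f (Set.Ioc 0 u₀))
    (hρpos : ∀ u ∈ Set.Ioc (0:ℝ) u₀, 0 < ρ u)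
    (hρ0 : Tendsto (fun s => ρ s / s) (nhdsWithin 0 (Set.Ioi 0)) (nhds 0))
    (hΓ : ∀ x : ℝ, Tendsto (fun h => f (h + ρ h * x) / f h) (nhdsWithin 0 (Set.Ioi 0))
      (nhds (Real.exp x))) (y : ℝ) :
    Tendsto (fun s => f (s * Real.sqrt (1 - ρ s / s * y ^ 2)) / f s)
      (nhdsWithin 0 (Set.Ioi 0)) (nhds (Real.exp (-(y ^ 2 / 2)))) := by
  have hpos : ∀ᶠ s in nhdsWithin (0:ℝ) (Set.Ioi 0), s ∈ Set.Ioo 0 u₀ :=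
    Ioo_mem_nhdsGT hu₀
  have hw : Tendsto (fun s => Real.sqrt (1 - ρ s / s * y ^ 2)) (nhdsWithin 0 (Set.Ioi 0))
      (nhds 1) := by
    have := ((hρ0.mul_const (y ^ 2)).const_sub 1).sqrt
    simpa using this
  have hx : Tendsto (fun s => y ^ 2 / (Real.sqrt (1 - ρ s / s * y ^ 2) + 1))
      (nhdsWithin 0 (Set.Ioi 0)) (nhds (y ^ 2 / 2)) := by
    have := (tendsto_const_nhds (x := y ^ 2)).div (hw.add_const 1) (by norm_num)
    norm_num at this
    exact this
  have hsmall : ∀ᶠ s in nhdsWithin (0:ℝ) (Set.Ioi 0), ρ s / s * y ^ 2 < 1 := by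
    have := hρ0.mul_const (y ^ 2)
    rw [zero_mul] at this
    exact this.eventually_lt_const one_pos
  have hin : ∀ z : ℝ, 0 ≤ z → ∀ᶠ s in nhdsWithin (0:ℝ) (Set.Ioi 0),
      s + ρ s * (-z) ∈ Set.Ioc 0 u₀ := by
    intro z hz
    have := hρ0.mul_const z
    rw [zero_mul] at this
    filter_upwards [hpos, this.eventually_lt_const one_pos] with s hs h1
    have hr := hρpos s ⟨hs.1, hs.2.le⟩
    have : s + ρ s * (-z) = s * (1 - ρ s / s * z) := by
      have := hs.1.ne'
      field_simp
      ring
    refine ⟨?_, ?_⟩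
    · rw [this]; exact mul_pos hs.1 (by linarith)
    · nlinarith [hs.2, mul_nonneg hr.le hz]
  have heq : ∀ᶠ s in nhdsWithin (0:ℝ) (Set.Ioi 0),
      s * Real.sqrt (1 - ρ s / s * y ^ 2)
        = s + ρ s * (-(y ^ 2 / (Real.sqrt (1 - ρ s / s * y ^ 2) + 1)))
      ∧ s * Real.sqrt (1 - ρ s / s * y ^ 2) ∈ Set.Ioc 0 u₀ ∧ Real.sqrt (1 - ρ s / s * y ^ 2) ≤ 1 := by
    filter_upwards [hpos, hsmall] with s hs h1
    have hr := hρpos s ⟨hs.1, hs.2.le⟩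
    have he : 0 ≤ ρ s / s := (div_pos hr hs.1).le
    have h3 := aux_w (ρ s / s) y he h1.le
    have hw1 : Real.sqrt (1 - ρ s / s * y ^ 2) ≤ 1 := by
      apply Real.sqrt_le_one.2
      nlinarith [mul_nonneg he (sq_nonneg y)]
    refine ⟨?_, ⟨mul_pos hs.1 (Real.sqrt_pos.2 (by linarith)), ?_⟩, hw1⟩
    · have hsr : ρ s = s * (ρ s / s) := by
        have := hs.1.ne'
        field_simp
      generalize y ^ 2 / (Real.sqrt (1 - ρ s / s * y ^ 2) + 1) = z at *
      rw [← h3]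
      nth_rewrite 2 [hsr]
      ring
    · nlinarith [hs.1, hs.2]
  rw [tendsto_order]
  constructor
  · intro a ha
    have hc : Tendsto (fun d : ℝ => Real.exp (-(y ^ 2 / 2 + d))) (nhdsWithin 0 (Set.Ioi 0))
        (nhds (Real.exp (-(y ^ 2 / 2)))) := by
      have : Continuous (fun d : ℝ => Real.exp (-(y ^ 2 / 2 + d))) := by fun_prop
      have h := this.tendsto 0
      simp only [add_zero] at h
      exact h.mono_left nhdsWithin_le_nhds
    obtain ⟨d, hda, hd0⟩ := ((hc.eventually_const_lt ha).and self_mem_nhdsWithin).exists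
    have hd0 : 0 < d := hd0
    filter_upwards [hpos, heq, hin (y ^ 2 / 2 + d) (by positivity),
      (hΓ (-(y ^ 2 / 2 + d))).eventually_const_lt hda,
      hx.eventually_lt_const (show y ^ 2 / 2 < y ^ 2 / 2 + d by linarith)] with s hs h1 h2 h3 h4
    refine h3.trans_le ?_
    have hr := hρpos s ⟨hs.1, hs.2.le⟩
    apply div_le_div_of_nonneg_right _ (hfpos s ⟨hs.1, hs.2.le⟩).le
    apply hfmono.monotoneOn h2 h1.2.1
    rw [h1.1]
    nlinarith
  · intro b hb
    filter_upwards [hpos, heq, hin (y ^ 2 / 2) (by positivity),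
      (hΓ (-(y ^ 2 / 2))).eventually_lt_const hb] with s hs h1 h2 h3
    refine lt_of_le_of_lt ?_ h3
    have hr := hρpos s ⟨hs.1, hs.2.le⟩
    apply div_le_div_of_nonneg_right _ (hfpos s ⟨hs.1, hs.2.le⟩).le
    apply hfmono.monotoneOn h1.2.1 h2
    rw [h1.1]
    have : y ^ 2 / 2 ≤ y ^ 2 / (Real.sqrt (1 - ρ s / s * y ^ 2) + 1) := by
      apply div_le_div_of_nonneg_left (sq_nonneg y)
      · have := Real.sqrt_nonneg (1 - ρ s / s * y ^ 2)
        linarith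
      · linarith [h1.2.2]
    nlinarith

lemma aux_gauss (p : ℕ) : ∫ y in Set.Ioi (0:ℝ), y ^ p * Real.exp (-(y ^ 2 / 2))
    = (2:ℝ) ^ (((p:ℝ) - 1)/2) * Real.Gamma (((p:ℝ) + 1)/2) := by
  have h := integral_rpow_mul_exp_neg_mul_rpow (p := 2) (q := p) (b := 1/2) (by norm_num)
    (by have : (0:ℝ) ≤ p := Nat.cast_nonneg p
        linarith) (by norm_num)
  have e : (2:ℝ) ^ (((p:ℝ) - 1)/2) = (1/2 : ℝ) ^ (-((p:ℝ)+1)/2) * (1/2) := by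
    rw [one_div, Real.inv_rpow (by norm_num), ← Real.rpow_neg (by norm_num)]
    have : ((p:ℝ) - 1)/2 = -(-((p:ℝ)+1)/2) - 1 := by ring
    rw [this, Real.rpow_sub_one (by norm_num)]
    ring
  rw [e, ← h]
  apply MeasureTheory.setIntegral_congr_fun measurableSet_Ioi
  intro y hy
  simp only [Real.rpow_natCast]
  congr 2
  rw [show (2:ℝ) = ((2:ℕ):ℝ) by norm_num, Real.rpow_natCast]
  push_cast
  ring

lemma aux_int (p : ℕ) : MeasureTheory.IntegrableOn
    (fun y : ℝ => y ^ p * Real.exp (-(y ^ 2 / 4))) (Set.Ioi 0) := by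
  have h := integrable_rpow_mul_exp_neg_mul_sq (b := 1/4) (by norm_num) (s := p)
    (by have : (0:ℝ) ≤ p := Nat.cast_nonneg p
        linarith)
  refine h.integrableOn.congr_fun ?_ measurableSet_Ioi
  intro y hy
  simp only [Real.rpow_natCast]
  congr 2
  ring

/-- Lemma `prel`: if `f` is a positive, C¹, strictly increasing function on
`(0,u₀]` belonging to the class Γ at 0 with auxiliary function `ρ = f/f′`, `ρ` nondecreasing
with `ρ(s)/s → 0`, then for all `p : ℕ`,
`∫₀¹ tᵖ/√(1−t²) f(s√(1−t²)) dt ∼ 2^{(p−1)/2} Γ((p+1)/2) f(s) (ρ(s)/s)^{(p+1)/2}` as `s → 0⁺`. -/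
theorem stmt3 (f ρ : ℝ → ℝ) (u₀ : ℝ) (hu₀ : 0 < u₀)
    (hfpos : ∀ u ∈ Set.Ioc (0:ℝ) u₀, 0 < f u)
    (hfC1 : ContDiffOn ℝ 1 f (Set.Ioc 0 u₀))
    (hfmono : StrictMonoOn f (Set.Ioc 0 u₀))
    (hρdef : ∀ u ∈ Set.Ioc (0:ℝ) u₀, ρ u = f u / deriv f u)
    (hρpos : ∀ u ∈ Set.Ioc (0:ℝ) u₀, 0 < ρ u)
    (hρmono : MonotoneOn ρ (Set.Ioc 0 u₀))
    (hρ0 : Tendsto (fun s => ρ s / s) (nhdsWithin 0 (Set.Ioi 0)) (nhds 0))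
    (hΓ : ∀ x : ℝ, Tendsto (fun h => f (h + ρ h * x) / f h) (nhdsWithin 0 (Set.Ioi 0))
      (nhds (Real.exp x))) :
    ∀ p : ℕ, Tendsto (fun s =>
        (∫ t in (0:ℝ)..1, t ^ p / Real.sqrt (1 - t^2) * f (s * Real.sqrt (1 - t^2))) /
        ((2:ℝ) ^ (((p:ℝ) - 1)/2) * Real.Gamma (((p:ℝ) + 1)/2) * f s *
          (ρ s / s) ^ (((p:ℝ) + 1)/2)))
      (nhdsWithin 0 (Set.Ioi 0)) (nhds 1) := by
  intro p
  have hpos : ∀ᶠ s in nhdsWithin (0:ℝ) (Set.Ioi 0), s ∈ Set.Ioo 0 u₀ :=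
    Ioo_mem_nhdsGT hu₀
  set F : ℝ → ℝ → ℝ := fun s => (Set.Ioo 0 (Real.sqrt (ρ s / s))⁻¹).indicator
    (fun y => y ^ p / Real.sqrt (1 - ρ s / s * y ^ 2) *
      (f (s * Real.sqrt (1 - ρ s / s * y ^ 2)) / f s)) with hF
  have hmemy : ∀ e y : ℝ, 0 < e → y ∈ Set.Ioo 0 (Real.sqrt e)⁻¹ → e * y ^ 2 < 1 := by
    intro e y he hy
    have hc := Real.sqrt_pos.2 he
    have h1 : Real.sqrt e * y < 1 := by
      have := mul_lt_mul_of_pos_left hy.2 hc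
      rwa [mul_inv_cancel₀ hc.ne'] at this
    have h0 : 0 < Real.sqrt e * y := mul_pos hc hy.1
    have h2 : e * y ^ 2 = (Real.sqrt e * y) ^ 2 := by rw [mul_pow, Real.sq_sqrt he.le]
    rw [h2]
    nlinarith
  have hdom : Tendsto (fun s => ∫ y, F s y) (nhdsWithin 0 (Set.Ioi 0))
      (nhds (∫ y, (Set.Ioi (0:ℝ)).indicator (fun y => y ^ p * Real.exp (-(y ^ 2 / 2))) y)) := by
    apply MeasureTheory.tendsto_integral_filter_of_dominated_convergence
      ((Set.Ioi (0:ℝ)).indicator (fun y => y ^ p * Real.exp (-(y ^ 2 / 4))))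
    · filter_upwards [hpos] with s hs
      have hr := hρpos s ⟨hs.1, hs.2.le⟩
      have he : 0 < ρ s / s := div_pos hr hs.1
      rw [hF]
      simp only
      rw [aestronglyMeasurable_indicator_iff measurableSet_Ioo]
      refine ContinuousOn.aestronglyMeasurable ?_ measurableSet_Ioo
      have hsq : ContinuousOn (fun y : ℝ => Real.sqrt (1 - ρ s / s * y ^ 2))
          (Set.Ioo 0 (Real.sqrt (ρ s / s))⁻¹) := by fun_prop
      have hp : ∀ y ∈ Set.Ioo 0 (Real.sqrt (ρ s / s))⁻¹,
          0 < Real.sqrt (1 - ρ s / s * y ^ 2) := fun y hy =>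
        Real.sqrt_pos.2 (by linarith [hmemy _ y he hy])
      refine ContinuousOn.mul ?_ (ContinuousOn.div_const ?_ _)
      · exact ContinuousOn.div (by fun_prop) hsq (fun y hy => (hp y hy).ne')
      · refine hfC1.continuousOn.comp (continuousOn_const.mul hsq) ?_
        intro y hy
        refine ⟨mul_pos hs.1 (hp y hy), ?_⟩
        have : Real.sqrt (1 - ρ s / s * y ^ 2) ≤ 1 := by
          apply Real.sqrt_le_one.2
          nlinarith [mul_nonneg he.le (sq_nonneg y)]
        nlinarith [hs.1, hs.2]
    · have h2 : ∀ᶠ s in nhdsWithin (0:ℝ) (Set.Ioi 0), ∀ u ∈ Set.Ioc (0:ℝ) s, ρ u ≤ u / 2 := by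
        have h3 := hρ0.eventually_lt_const (show (0:ℝ) < 1/2 by norm_num)
        rw [eventually_iff, mem_nhdsGT_iff_exists_Ioo_subset] at h3
        obtain ⟨d, hd, hsub⟩ := h3
        filter_upwards [Ioo_mem_nhdsGT (show (0:ℝ) < d from hd)] with s hs u hu
        have h4 : ρ u / u < 1 / 2 := hsub ⟨hu.1, hu.2.trans_lt hs.2⟩
        rw [div_lt_iff₀ hu.1] at h4
        linarith
      filter_upwards [hpos, h2] with s hs h2
      refine Eventually.of_forall fun y => ?_
      have hr := hρpos s ⟨hs.1, hs.2.le⟩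
      have he : 0 < ρ s / s := div_pos hr hs.1
      have hfs := hfpos s ⟨hs.1, hs.2.le⟩
      by_cases hy : y ∈ Set.Ioo 0 (Real.sqrt (ρ s / s))⁻¹
      · rw [hF]
        simp only
        rw [Set.indicator_of_mem hy, Set.indicator_of_mem (show y ∈ Set.Ioi 0 from hy.1)]
        have hlt := hmemy _ y he hy
        have hww := aux_w (ρ s / s) y he.le hlt.le
        have hw0 : 0 < Real.sqrt (1 - ρ s / s * y ^ 2) := Real.sqrt_pos.2 (by linarith)
        have hw1 : Real.sqrt (1 - ρ s / s * y ^ 2) ≤ 1 := by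
          apply Real.sqrt_le_one.2
          nlinarith [mul_nonneg he.le (sq_nonneg y)]
        set w := Real.sqrt (1 - ρ s / s * y ^ 2) with hw
        have hsw : s * w ≤ s := by nlinarith [hs.1]
        have hsw0 : 0 < s * w := mul_pos hs.1 hw0
        have hb := aux_bound f ρ u₀ hfpos hfC1 hρdef hρpos hρmono s hs.1 hs.2 h2 (s * w) hsw0 hsw
        have hfw := hfpos (s * w) ⟨hsw0, hsw.trans hs.2.le⟩
        have hy0 : 0 < y := hy.1
        rw [Real.norm_of_nonneg (by positivity)]
        have e1 : s * w / s = w := by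
          have := hs.1.ne'
          field_simp
        have e2 : (s - s * w) / (2 * ρ s) = y ^ 2 / (2 * (w + 1)) := by
          have h5 : 1 - w = ρ s / s * (y ^ 2 / (w + 1)) := by linarith
          rw [show s - s * w = s * (1 - w) by ring, h5]
          have := hs.1.ne'
          field_simp
        rw [e1, e2] at hb
        have hexp : Real.exp (-(y ^ 2 / (2 * (w + 1)))) ≤ Real.exp (-(y ^ 2 / 4)) := by
          apply Real.exp_le_exp.2
          apply neg_le_neg
          apply div_le_div_of_nonneg_left (sq_nonneg y) (by positivity)
          linarith
        calc y ^ p / w * (f (s * w) / f s)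
            ≤ y ^ p / w * (w * Real.exp (-(y ^ 2 / (2 * (w + 1))))) := by gcongr
          _ = y ^ p * Real.exp (-(y ^ 2 / (2 * (w + 1)))) := by field_simp
          _ ≤ _ := by gcongr
      · rw [hF]
        simp only
        rw [Set.indicator_of_notMem hy, norm_zero]
        apply Set.indicator_nonneg
        intro z hz
        have hz : 0 < z := hz
        positivity
    · rw [MeasureTheory.integrable_indicator_iff measurableSet_Ioi]
      exact aux_int p
    · refine Eventually.of_forall fun y => ?_
      by_cases hy : 0 < y
      · rw [Set.indicator_of_mem (show y ∈ Set.Ioi 0 from hy)]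
        have hw : Tendsto (fun s => Real.sqrt (1 - ρ s / s * y ^ 2)) (nhdsWithin 0 (Set.Ioi 0))
            (nhds 1) := by
          have := ((hρ0.mul_const (y ^ 2)).const_sub 1).sqrt
          simpa using this
        have hl := aux_lim f ρ u₀ hu₀ hfpos hfmono hρpos hρ0 hΓ y
        have h6 := ((tendsto_const_nhds (x := y ^ p)).div hw one_ne_zero).mul hl
        rw [div_one] at h6
        refine h6.congr' ?_
        have h7 : Tendsto (fun s => Real.sqrt (ρ s / s) * y) (nhdsWithin 0 (Set.Ioi 0))
            (nhds 0) := by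
          have := hρ0.sqrt.mul_const y
          simpa using this
        filter_upwards [hpos, h7.eventually_lt_const one_pos] with s hs h8
        have hr := hρpos s ⟨hs.1, hs.2.le⟩
        have hc : 0 < Real.sqrt (ρ s / s) := Real.sqrt_pos.2 (div_pos hr hs.1)
        have hy' : y ∈ Set.Ioo 0 (Real.sqrt (ρ s / s))⁻¹ := by
          refine ⟨hy, ?_⟩
          rw [lt_inv_comm₀ hy hc, ← one_div, lt_div_iff₀ hy]
          exact h8
        rw [hF]
        simp only
        rw [Set.indicator_of_mem hy']
        rfl
      · rw [Set.indicator_of_notMem (show y ∉ Set.Ioi 0 from hy)]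
        refine tendsto_const_nhds.congr fun s => ?_
        rw [hF]
        simp only
        rw [Set.indicator_of_notMem (fun h => hy h.1)]
  rw [MeasureTheory.integral_indicator measurableSet_Ioi, aux_gauss] at hdom
  set K := (2:ℝ) ^ (((p:ℝ) - 1)/2) * Real.Gamma (((p:ℝ) + 1)/2) with hK
  have hKpos : 0 < K := mul_pos (Real.rpow_pos_of_pos two_pos _)
    (Real.Gamma_pos_of_pos (by positivity))
  have hfin := hdom.div_const K
  rw [div_self hKpos.ne'] at hfin
  refine hfin.congr' ?_
  filter_upwards [hpos] with s hs
  have hr := hρpos s ⟨hs.1, hs.2.le⟩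
  have he : 0 < ρ s / s := div_pos hr hs.1
  have hfs := hfpos s ⟨hs.1, hs.2.le⟩
  have hc : 0 < Real.sqrt (ρ s / s) := Real.sqrt_pos.2 he
  have hcsq := Real.sq_sqrt he.le
  have hce : (ρ s / s) ^ (((p:ℝ) + 1)/2) = Real.sqrt (ρ s / s) ^ (p + 1) := by
    rw [Real.sqrt_eq_rpow, ← Real.rpow_natCast, ← Real.rpow_mul he.le]
    congr 1
    push_cast
    ring
  have hint : (∫ t in (0:ℝ)..1, t ^ p / Real.sqrt (1 - t^2) * f (s * Real.sqrt (1 - t^2)))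
      = Real.sqrt (ρ s / s) ^ (p + 1) * f s * ∫ y, F s y := by
    have h9 := intervalIntegral.mul_integral_comp_mul_left (a := 0)
      (b := (Real.sqrt (ρ s / s))⁻¹)
      (f := fun t : ℝ => t ^ p / Real.sqrt (1 - t^2) * f (s * Real.sqrt (1 - t^2)))
      (c := Real.sqrt (ρ s / s))
    rw [mul_zero, mul_inv_cancel₀ hc.ne'] at h9
    rw [← h9, hF]
    simp only
    rw [MeasureTheory.integral_indicator measurableSet_Ioo,
      intervalIntegral.integral_of_le (inv_pos.2 hc).le,
      MeasureTheory.integral_Ioc_eq_integral_Ioo, ← MeasureTheory.integral_const_mul,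
      ← MeasureTheory.integral_const_mul]
    congr 1
    funext y
    rw [mul_pow, mul_pow, hcsq]
    field_simp
    ring
  rw [hint, hce]
  have := hc.ne'
  field_simp
end

section
/- Let g be a bounded probability density on ℝ that is continuous at 0 with g(0) > 0, and let q be a probability density on (0,∞) that is positive, continuously differentiable and strictly increasing on some (0, u₀], belongs to the class Γ at 0 with auxiliary function ρ(u) = q(u)/q′(u), with ρ nondecreasing on (0, u₀] and ρ(s)/s → 0 as s → 0⁺. Define m(v) = v·∫_{−1}^{1} (g(vt)/√(1−t²)) · q(v√(1−t²)) dt. Then (i) m(v) ∼ Γ(1/2)·√(2 v ρ(v)) · g(0) · q(v) as v → 0⁺ (where Γ(1/2) = √π); (ii) if additionally g̃ is a second bounded density continuous at 0 with g̃(0) > 0, then m₂(v) = v²·∫₀^{2π}∫₀¹ (x/√(1−x²)) · g(vx cos θ) · g̃(vx sin θ) · q(v√(1−x²)) dx dθ satisfies m₂(v) ∼ 2π · g(0) · g̃(0) · v ρ(v) · q(v) as v → 0⁺; (iii) if moreover m belongs to the class Γ at 0, then ρ is an auxiliary function for m, i.e. for every x ∈ ℝ, m(v + ρ(v)x)/m(v)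 → exp(x) as v → 0⁺. -/
open MeasureTheory Filter Real Set

lemma aux_log (q ρ : ℝ → ℝ) (u₀ : ℝ) 
    (hq_pos : ∀ u ∈ Set.Ioc (0:ℝ) u₀, 0 < q u)
    (hq_C1 : ContDiffOn ℝ 1 q (Set.Ioc 0 u₀))
    (hρdef : ∀ u ∈ Set.Ioc (0:ℝ) u₀, ρ u = q u / deriv q u)
    (hρpos : ∀ u ∈ Set.Ioc (0:ℝ) u₀, 0 < ρ u)
    (hρmono : MonotoneOn ρ (Set.Ioc 0 u₀)) (a b : ℝ) (ha : 0 < a) (hab : a < b) (hb : b < u₀) :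
    (b - a) / ρ b ≤ log (q b) - log (q a) ∧ log (q b) - log (q a) ≤ (b - a) / ρ a := by
  have hd : ∀ u, 0 < u → u < u₀ → HasDerivAt (fun x => log (q x)) (1 / ρ u) u := by
    intro u h0 h1
    have hu : u ∈ Ioc 0 u₀ := ⟨h0, h1.le⟩
    have hdq : DifferentiableAt ℝ q u :=
      (hq_C1.differentiableOn one_ne_zero).differentiableAt (Ioc_mem_nhds h0 h1)
    have := hdq.hasDerivAt.log (hq_pos u hu).ne'
    rw [hρdef u hu, one_div_div]; exact this
  obtain ⟨c, hc, hc'⟩ := exists_hasDerivAt_eq_slope (fun x => log (q x)) (fun u => 1 / ρ u) hab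
    (fun x hx => (hd x (by linarith [hx.1]) (by linarith [hx.2])).continuousAt.continuousWithinAt)
    (fun x hx => hd x (by linarith [hx.1]) (by linarith [hx.2]))
  have hba : 0 < b - a := by linarith
  have e : log (q b) - log (q a) = (b - a) / ρ c := by
    have := (hρpos c ⟨by linarith [hc.1], by linarith [hc.2]⟩)
    rw [div_eq_mul_one_div, hc']
    field_simp
  have hA : a ∈ Ioc 0 u₀ := ⟨ha, by linarith⟩
  have hB : b ∈ Ioc 0 u₀ := ⟨by linarith, hb.le⟩
  have hC : c ∈ Ioc 0 u₀ := ⟨by linarith [hc.1], by linarith [hc.2]⟩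
  rw [e]
  exact ⟨div_le_div_of_nonneg_left hba.le (hρpos c hC) (hρmono hC hB hc.2.le),
    div_le_div_of_nonneg_left hba.le (hρpos a hA) (hρmono hA hC hc.1.le)⟩

lemma aux_dom (q ρ : ℝ → ℝ) (u₀ : ℝ) 
    (hq_nonneg : ∀ t, 0 ≤ q t) (hq_supp : ∀ t ≤ (0:ℝ), q t = 0)
    (hq_pos : ∀ u ∈ Set.Ioc (0:ℝ) u₀, 0 < q u)
    (hρpos : ∀ u ∈ Set.Ioc (0:ℝ) u₀, 0 < ρ u)
    (hL : ∀ a b : ℝ, 0 < a → a < b → b < u₀ →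
      (b - a) / ρ b ≤ log (q b) - log (q a) ∧ log (q b) - log (q a) ≤ (b - a) / ρ a)
    (v : ℝ) (hv : 0 < v) (hv' : v < u₀) (y : ℝ) (hy : 0 < y) :
    q (v - ρ v * y) / q v ≤ exp (-y) := by
  have hV : v ∈ Ioc 0 u₀ := ⟨hv, hv'.le⟩
  have hρ := hρpos v hV
  rcases le_or_gt (v - ρ v * y) 0 with h | h
  · rw [hq_supp _ h]; simp [exp_nonneg]
  · have h1 := (hL _ v h (by nlinarith [mul_pos hρ hy]) hv').1
    have e : (v - (v - ρ v * y)) / ρ v = y := by field_simp; ring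
    rw [e] at h1
    have hp := hq_pos (v - ρ v * y) ⟨h, by nlinarith [mul_pos hρ hy]⟩
    have hp' := hq_pos v hV
    rw [← log_le_iff_le_exp (by positivity), log_div hp.ne' hp'.ne']
    linarith

lemma aux_w_s5 (ρ : ℝ → ℝ) 
    (hρ0 : Tendsto (fun s => ρ s / s) (nhdsWithin 0 (Set.Ioi 0)) (nhds 0)) (x : ℝ) :
    Tendsto (fun v => (v + ρ v * x) / v) (nhdsWithin 0 (Set.Ioi 0)) (nhds 1) ∧ 
    Tendsto (fun v => v + ρ v * x) (nhdsWithin 0 (Set.Ioi 0)) (nhdsWithin 0 (Set.Ioi 0)) := by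
  have h1 : Tendsto (fun v => (v + ρ v * x) / v) (nhdsWithin 0 (Set.Ioi 0)) (nhds 1) := by
    have := (hρ0.mul_const x).const_add 1
    simp only [zero_mul, add_zero] at this
    refine this.congr' ?_
    filter_upwards [self_mem_nhdsWithin] with v hv
    have : v ≠ 0 := (mem_Ioi.1 hv).ne'
    field_simp
  refine ⟨h1, tendsto_nhdsWithin_iff.2 ⟨?_, ?_⟩⟩
  · have h2 : Tendsto (fun v : ℝ => v) (nhdsWithin 0 (Set.Ioi 0)) (nhds 0) :=
      tendsto_id.mono_left nhdsWithin_le_nhds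
    have := h1.mul h2
    rw [mul_zero] at this
    refine this.congr' ?_
    filter_upwards [self_mem_nhdsWithin] with v hv
    have : v ≠ 0 := (mem_Ioi.1 hv).ne'
    field_simp
  · filter_upwards [self_mem_nhdsWithin, h1.eventually (lt_mem_nhds (zero_lt_one))] with v hv h
    exact (div_pos_iff_of_pos_right hv).1 h

lemma aux_ev (u₀ : ℝ) (hu₀ : 0 < u₀) : ∀ᶠ v in nhdsWithin (0:ℝ) (Ioi 0), 0 < v ∧ v < u₀ := by
  filter_upwards [self_mem_nhdsWithin, nhdsWithin_le_nhds (gt_mem_nhds hu₀)] with v h h'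
  exact ⟨h, h'⟩

lemma aux_rho (q ρ : ℝ → ℝ) (u₀ : ℝ) (hu₀ : 0 < u₀)
    (hq_pos : ∀ u ∈ Set.Ioc (0:ℝ) u₀, 0 < q u)
    (hρpos : ∀ u ∈ Set.Ioc (0:ℝ) u₀, 0 < ρ u)
    (hρ0 : Tendsto (fun s => ρ s / s) (nhdsWithin 0 (Set.Ioi 0)) (nhds 0))
    (hΓ : ∀ x : ℝ, Tendsto (fun h => q (h + ρ h * x) / q h) (nhdsWithin 0 (Set.Ioi 0))
      (nhds (Real.exp x)))
    (hL : ∀ a b : ℝ, 0 < a → a < b → b < u₀ →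
      (b - a) / ρ b ≤ log (q b) - log (q a) ∧ log (q b) - log (q a) ≤ (b - a) / ρ a)
    (x : ℝ) : Tendsto (fun v => ρ (v + ρ v * x) / ρ v) (nhdsWithin 0 (Set.Ioi 0)) (nhds 1) := by
  have hF : ∀ x : ℝ, Tendsto (fun v => log (q (v + ρ v * x)) - log (q v)) (nhdsWithin 0 (Set.Ioi 0))
      (nhds x) := by
    intro x
    have := (hΓ x).log (exp_pos x).ne'
    rw [log_exp] at this
    refine this.congr' ?_
    filter_upwards [aux_ev u₀ hu₀, (aux_w_s5 ρ hρ0 x).2.eventually (aux_ev u₀ hu₀)] with v h h'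
    exact log_div (hq_pos _ ⟨h'.1, h'.2.le⟩).ne' (hq_pos _ ⟨h.1, h.2.le⟩).ne'
  have hup := ((hF (x + 1)).sub (hF x)).inv₀ (by norm_num)
  have hlo := ((hF x).sub (hF (x - 1))).inv₀ (by norm_num)
  simp only [sub_sub_cancel, add_sub_cancel_left, inv_one] at hup hlo
  refine tendsto_of_tendsto_of_tendsto_of_le_of_le' hlo hup ?_ ?_
  · filter_upwards [aux_ev u₀ hu₀, (aux_w_s5 ρ hρ0 x).2.eventually (aux_ev u₀ hu₀),
      (aux_w_s5 ρ hρ0 (x - 1)).2.eventually (aux_ev u₀ hu₀)] with v h h1 h2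
    have hr := hρpos v ⟨h.1, h.2.le⟩
    have hr1 := hρpos _ ⟨h1.1, h1.2.le⟩
    have := (hL _ _ h2.1 (by nlinarith : v + ρ v * (x - 1) < v + ρ v * x) h1.2).1
    have e : v + ρ v * x - (v + ρ v * (x - 1)) = ρ v := by ring
    rw [e] at this
    rw [← inv_div]
    apply inv_anti₀ (by positivity)
    linarith
  · filter_upwards [aux_ev u₀ hu₀, (aux_w_s5 ρ hρ0 x).2.eventually (aux_ev u₀ hu₀),
      (aux_w_s5 ρ hρ0 (x + 1)).2.eventually (aux_ev u₀ hu₀)] with v h h1 h2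
    have hr := hρpos v ⟨h.1, h.2.le⟩
    have hr1 := hρpos _ ⟨h1.1, h1.2.le⟩
    have hr2 := hρpos _ ⟨h2.1, h2.2.le⟩
    have hh := (hL _ _ h1.1 (by nlinarith : v + ρ v * x < v + ρ v * (x + 1)) h2.2)
    have e : v + ρ v * (x + 1) - (v + ρ v * x) = ρ v := by ring
    rw [e] at hh
    rw [← inv_div]
    apply inv_anti₀ 
    · have : 0 < ρ v / ρ (v + ρ v * (x + 1)) := by positivity
      linarith [hh.1]
    linarith [hh.2]
lemma aux_sub (F : ℝ → ℝ) : ∫ x in (0:ℝ)..1, F x =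
    ∫ s in (0:ℝ)..1, s / √(1 - s ^ 2) * F (√(1 - s ^ 2)) := by
  have him : (fun s : ℝ => √(1 - s ^ 2)) '' Ioo 0 1 = Ioo 0 1 := by
    have key : ∀ s ∈ Ioo (0:ℝ) 1, √(1 - s ^ 2) ∈ Ioo (0:ℝ) 1 := by
      intro s hs
      refine ⟨sqrt_pos.2 (by nlinarith [hs.1, hs.2]), ?_⟩
      rw [sqrt_lt' one_pos]
      nlinarith [hs.1, hs.2]
    ext x
    constructor
    · rintro ⟨s, hs, rfl⟩
      exact key s hs
    · intro hx
      refine ⟨_, key x hx, ?_⟩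
      have : 0 ≤ 1 - x ^ 2 := by nlinarith [hx.1, hx.2]
      simp only
      rw [sq_sqrt this, sub_sub_cancel, sqrt_sq hx.1.le]
  have h := integral_image_eq_integral_abs_deriv_smul (s := Ioo (0:ℝ) 1)
    (f := fun s : ℝ => √(1 - s ^ 2)) (f' := fun s => - (s / √(1 - s ^ 2))) measurableSet_Ioo
    (by
      intro s hs
      have h1 : HasDerivAt (fun s : ℝ => 1 - s ^ 2) (- (2 * s)) s := by
        simpa using (hasDerivAt_pow 2 s).const_sub 1
      have h2 := h1.sqrt (by nlinarith [hs.1, hs.2] : (1 - s ^ 2) ≠ 0)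
      refine (h2.congr_deriv ?_).hasDerivWithinAt
      rw [neg_div, mul_div_mul_left _ _ two_ne_zero])
    (by
      intro a ha b hb hab
      have := (sqrt_inj (by nlinarith [ha.1, ha.2]) (by nlinarith [hb.1, hb.2])).1 hab
      have h3 : a ^ 2 = b ^ 2 := by linarith
      exact (pow_left_inj₀ ha.1.le hb.1.le two_ne_zero).1 h3) F
  rw [him] at h
  rw [intervalIntegral.integral_of_le zero_le_one, intervalIntegral.integral_of_le zero_le_one,
    integral_Ioc_eq_integral_Ioo, integral_Ioc_eq_integral_Ioo, h]
  refine setIntegral_congr_fun measurableSet_Ioo fun s hs => ?_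
  simp only [smul_eq_mul, abs_neg]
  rw [abs_of_nonneg (div_nonneg hs.1.le (sqrt_nonneg _))]

lemma aux_lin (q : ℝ → ℝ) (hq_supp : ∀ t ≤ (0:ℝ), q t = 0) (k : ℝ → ℝ) (v r : ℝ) (hv : 0 < v)
    (hr : 0 < r) : ∫ s in (0:ℝ)..1, k s * q (v * s) =
      r / v * ∫ y in Ioi (0:ℝ), k (1 - r / v * y) * q (v - r * y) := by
  have h := intervalIntegral.integral_comp_sub_mul (a := 0) (b := v / r) 
    (fun s => k s * q (v * s)) (c := r / v) (by positivity) 1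
  have e : 1 - r / v * (v / r) = 0 := by field_simp; ring
  rw [e, mul_zero, sub_zero, smul_eq_mul] at h
  have e2 : ∫ y in Ioi (0:ℝ), k (1 - r / v * y) * q (v - r * y) = 
      ∫ x in (0:ℝ)..v / r, k (1 - r / v * x) * q (v * (1 - r / v * x)) := by
    rw [intervalIntegral.integral_of_le (by positivity)]
    rw [setIntegral_eq_of_subset_of_forall_sdiff_eq_zero measurableSet_Ioi 
      (Ioc_subset_Ioi_self : Ioc 0 (v / r) ⊆ _)]
    · refine setIntegral_congr_fun measurableSet_Ioc fun s hs => ?_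
      congr 2
      field_simp
    · rintro y ⟨hy, hy'⟩
      have : v / r < y := by
        by_contra hh
        exact hy' ⟨hy, not_lt.1 hh⟩
      rw [div_lt_iff₀ hr] at this
      rw [hq_supp _ (by linarith), mul_zero]
  rw [e2, h]
  field_simp

lemma aux_half (q : ℝ → ℝ) (hq_supp : ∀ t ≤ (0:ℝ), q t = 0) (v r : ℝ) (hv : 0 < v)
    (hr : 0 < r) (hqv : q v ≠ 0) : v * ∫ t in (0:ℝ)..1, 1 / √(1 - t^2) * q (v * √(1 - t^2)) =
     √(2 * v * r) / 2 * q v * 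
      ∫ y in Ioi (0:ℝ), q (v - r * y) / q v / √(y * (1 - r / v * y / 2)) := by
  rw [aux_sub]
  have : ∫ s in (0:ℝ)..1, s / √(1 - s ^ 2) * (1 / √(1 - √(1 - s ^ 2) ^ 2) * q (v * √(1 - √(1 - s ^ 2) ^ 2)))
      = ∫ s in (0:ℝ)..1, 1 / √(1 - s ^ 2) * q (v * s) := by
    refine intervalIntegral.integral_congr_ae (Eventually.of_forall fun s hs => ?_)
    rw [uIoc_of_le zero_le_one] at hs
    rw [sq_sqrt (by nlinarith [hs.1, hs.2]), sub_sub_cancel, sqrt_sq hs.1.le]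
    have := hs.1
    field_simp
  rw [this, aux_lin q hq_supp (fun s => 1 / √(1 - s ^ 2)) v r hv hr, ← mul_assoc,
    ← integral_const_mul, ← integral_const_mul]
  refine setIntegral_congr_fun measurableSet_Ioi fun y hy => ?_
  have hy : 0 < y := hy
  have e : 1 - (1 - r / v * y) ^ 2 = (2 * r / v) * (y * (1 - r / v * y / 2)) := by ring
  rw [e, sqrt_mul (by positivity)]
  have e3 : √(2 * v * r) = v * √(2 * r / v) := by
    rw [← sqrt_sq hv.le, ← sqrt_mul (by positivity), sqrt_sq hv.le]
    congr 1
    field_simp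
  have e4 : √(2 * r / v) ^ 2 = 2 * r / v := sq_sqrt (by positivity)
  have e5 : 0 < √(2 * r / v) := by positivity
  rw [e3]
  generalize √(2 * r / v) = A at *
  have : v * (r / v) = v * A / 2 * A := by
    field_simp at e4 ⊢
    linarith
  rw [this]
  field_simp

lemma aux_K (q : ℝ → ℝ) (hq_supp : ∀ t ≤ (0:ℝ), q t = 0) (v r : ℝ) (hv : 0 < v)
    (hr : 0 < r) (hqv : q v ≠ 0) : v * ∫ x in (0:ℝ)..1, x / √(1 - x^2) * q (v * √(1 - x^2)) =
     r * q v * ∫ y in Ioi (0:ℝ), q (v - r * y) / q v := by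
  rw [aux_sub]
  have : ∫ s in (0:ℝ)..1, s / √(1 - s ^ 2) * (√(1 - s ^ 2) / √(1 - √(1 - s ^ 2) ^ 2) * q (v * √(1 - √(1 - s ^ 2) ^ 2)))
      = ∫ s in (0:ℝ)..1, 1 * q (v * s) := by
    rw [intervalIntegral.integral_of_le zero_le_one, intervalIntegral.integral_of_le zero_le_one,
      integral_Ioc_eq_integral_Ioo, integral_Ioc_eq_integral_Ioo]
    refine setIntegral_congr_fun measurableSet_Ioo fun s hs => ?_
    have h0 : 0 < 1 - s ^ 2 := by nlinarith [hs.1, hs.2]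
    have h1 := sqrt_pos.2 h0
    rw [sq_sqrt h0.le, sub_sub_cancel, sqrt_sq hs.1.le]
    have := hs.1
    field_simp
  rw [this, aux_lin q hq_supp (fun s => 1) v r hv hr, ← mul_assoc,
    ← integral_const_mul, ← integral_const_mul]
  refine setIntegral_congr_fun measurableSet_Ioi fun y hy => ?_
  field_simp

lemma aux_qmp (c : ℝ) (hc : c ≠ 0) : 
    Measure.QuasiMeasurePreserving (fun x : ℝ => c * x) volume volume := by
  refine ⟨by fun_prop, ?_⟩
  rw [Real.map_volume_mul_left hc]
  exact Measure.smul_absolutelyContinuous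

lemma aux_dct (q ρ : ℝ → ℝ) (u₀ : ℝ) (hu₀ : 0 < u₀)
    (hq_nonneg : ∀ t, 0 ≤ q t) (hq_supp : ∀ t ≤ (0:ℝ), q t = 0)
    (hq_int : ∫ t in Set.Ioi (0:ℝ), q t = 1)
    (hρpos : ∀ u ∈ Set.Ioc (0:ℝ) u₀, 0 < ρ u)
    (hρ0 : Tendsto (fun s => ρ s / s) (nhdsWithin 0 (Set.Ioi 0)) (nhds 0))
    (hΓ : ∀ x : ℝ, Tendsto (fun h => q (h + ρ h * x) / q h) (nhdsWithin 0 (Set.Ioi 0))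
      (nhds (Real.exp x)))
    (hev : ∀ᶠ v in nhdsWithin (0:ℝ) (Ioi 0), 0 < v ∧ v < u₀)
    (hdom : ∀ v : ℝ, 0 < v → v < u₀ → ∀ y : ℝ, 0 < y → q (v - ρ v * y) / q v ≤ exp (-y)) : 
    Tendsto (fun v => ∫ y in Ioi (0:ℝ), q (v - ρ v * y) / q v) (nhdsWithin 0 (Ioi 0)) (nhds 1) ∧
    Tendsto (fun v => ∫ y in Ioi (0:ℝ), q (v - ρ v * y) / q v / √(y * (1 - ρ v / v * y / 2)))
      (nhdsWithin 0 (Ioi 0)) (nhds (Gamma (1/2))) := by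
  have hqm : AEStronglyMeasurable q volume := by
    have h1 : IntegrableOn q (Ioi 0) := Integrable.of_integral_ne_zero (by rw [hq_int]; simp)
    have h2 := (integrable_indicator_iff measurableSet_Ioi).2 h1
    have h3 : (Ioi 0).indicator q = q := by
      ext x
      by_cases hx : 0 < x
      · rw [indicator_of_mem (mem_Ioi.2 hx)]
      · rw [indicator_of_notMem (by simpa using hx), hq_supp x (not_lt.1 hx)]
    rw [h3] at h2
    exact h2.1
  have hmeas : ∀ᶠ v in nhdsWithin (0:ℝ) (Ioi 0), AEStronglyMeasurable
      (fun y => q (v - ρ v * y) / q v) (volume.restrict (Ioi 0)) := by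
    filter_upwards [hev] with v hv
    have hr := hρpos v ⟨hv.1, hv.2.le⟩
    have h1 := (measurePreserving_add_left (volume : Measure ℝ) v).quasiMeasurePreserving.comp
      (aux_qmp (-ρ v) (by linarith))
    have h2 := (hqm.comp_quasiMeasurePreserving h1).mul (aestronglyMeasurable_const (b := (q v)⁻¹))
    refine AEStronglyMeasurable.restrict ?_
    refine h2.congr (Eventually.of_forall fun y => ?_)
    simp [sub_eq_add_neg, div_eq_mul_inv]
  have hlim : ∀ y : ℝ, Tendsto (fun v => q (v - ρ v * y) / q v) (nhdsWithin 0 (Ioi 0))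
      (nhds (exp (-y))) := by
    intro y
    refine (hΓ (-y)).congr fun v => ?_
    congr 2
    ring
  constructor
  · rw [← integral_exp_neg_Ioi_zero]
    refine tendsto_integral_filter_of_dominated_convergence (fun y => exp (-y)) hmeas ?_
      (integrableOn_exp_neg_Ioi 0) (Eventually.of_forall hlim)
    filter_upwards [hev] with v hv
    filter_upwards [ae_restrict_mem measurableSet_Ioi] with y hy
    rw [norm_of_nonneg (div_nonneg (hq_nonneg _) (hq_nonneg _))]
    exact hdom v hv.1 hv.2 y hy
  · have hG : ∀ y : ℝ, 0 < y → exp (-y) * y ^ ((1/2 : ℝ) - 1) = exp (-y) / √y := by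
      intro y hy
      rw [div_eq_mul_inv (exp (-y)), sqrt_eq_rpow, ← rpow_neg hy.le]
      norm_num
    rw [Gamma_eq_integral (by norm_num)]
    refine tendsto_integral_filter_of_dominated_convergence
      (fun y => √2 * (exp (-y) * y ^ ((1/2 : ℝ) - 1))) ?_ ?_
      ((GammaIntegral_convergent (by norm_num)).const_mul _) ?_
    · filter_upwards [hmeas] with v hv
      have hm : Measurable (fun y : ℝ => (√(y * (1 - ρ v / v * y / 2)))⁻¹) := by fun_prop
      refine (hv.mul hm.aestronglyMeasurable).congr (Eventually.of_forall fun y => ?_)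
      simp [div_eq_mul_inv]
    · filter_upwards [hev] with v hv
      filter_upwards [ae_restrict_mem measurableSet_Ioi] with y hy
      have hy : 0 < y := hy
      have hr := hρpos v ⟨hv.1, hv.2.le⟩
      rw [norm_of_nonneg (div_nonneg (div_nonneg (hq_nonneg _) (hq_nonneg _)) (sqrt_nonneg _)),
        hG y hy]
      rcases le_or_gt (v - ρ v * y) 0 with h | h
      · rw [hq_supp _ h]
        simp only [zero_div]
        positivity
      · have hv0 := hv.1
        have h1 : ρ v / v * y ≤ 1 := by
          rw [div_mul_eq_mul_div, div_le_one hv0]; linarith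
        have h2 : √y / √2 ≤ √(y * (1 - ρ v / v * y / 2)) := by
          rw [← sqrt_div hy.le]
          apply sqrt_le_sqrt
          nlinarith
        have h3 := hdom v hv.1 hv.2 y hy
        calc _ ≤ exp (-y) / (√y / √2) := by
              apply div_le_div₀ (exp_nonneg _) h3 (by positivity) h2
          _ = _ := by field_simp
    · filter_upwards [ae_restrict_mem measurableSet_Ioi] with y hy
      have hy : 0 < y := hy
      rw [hG y hy]
      refine (hlim y).div ?_ (by positivity)
      have h := ((((hρ0.mul_const y).div_const 2).const_sub 1).const_mul y).sqrt
      simpa using h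

lemma aux_sand (μ : Measure ℝ) (W G : ℝ → ℝ) (hW : Integrable W μ) (hW0 : ∀ᵐ x ∂μ, 0 ≤ W x)
    (hG : AEStronglyMeasurable G μ) (c ε : ℝ) (h : ∀ᵐ x ∂μ, |G x - c| ≤ ε) :
    |∫ x, G x * W x ∂μ - c * ∫ x, W x ∂μ| ≤ ε * ∫ x, W x ∂μ := by
  have hGW : Integrable (fun x => G x * W x) μ := by
    refine hW.bdd_mul (c := |c| + ε) hG ?_
    filter_upwards [h] with x hx
    rw [norm_eq_abs]
    have := abs_add_le (G x - c) c
    rw [sub_add_cancel] at this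
    linarith
  rw [← integral_const_mul, ← integral_const_mul, ← integral_sub hGW (hW.const_mul c),
    ← norm_eq_abs]
  refine norm_integral_le_of_norm_le (hW.const_mul ε) ?_
  filter_upwards [h, hW0] with x hx hx0
  rw [norm_eq_abs, ← sub_mul, abs_mul, abs_of_nonneg hx0]
  exact mul_le_mul_of_nonneg_right hx hx0

lemma aux_one (g : ℝ → ℝ) (hg_int : ∫ t, g t = 1) (hg_cont : ContinuousAt g 0) 
    (W : ℝ → ℝ → ℝ) (hW0 : ∀ v x, 0 ≤ W v x) 
    (hpos : ∀ᶠ v in nhdsWithin (0:ℝ) (Ioi 0), IntervalIntegrable (W v) volume (-1) 1 ∧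
      0 < ∫ x in (-1:ℝ)..1, W v x) :
    Tendsto (fun v => (∫ t in (-1:ℝ)..1, g (v * t) * W v t) / ∫ x in (-1:ℝ)..1, W v x)
      (nhdsWithin (0:ℝ) (Ioi 0)) (nhds (g 0)) := by
  have hgm : AEStronglyMeasurable g volume := 
    (Integrable.of_integral_ne_zero (by rw [hg_int]; simp)).1
  rw [Metric.tendsto_nhds]
  intro ε hε
  obtain ⟨δ, hδ, hd⟩ := Metric.continuousAt_iff.1 hg_cont (ε / 2) (by positivity)
  filter_upwards [hpos, aux_ev δ hδ] with v ⟨hi, hp⟩ ⟨hv, hv'⟩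
  have hs := aux_sand (volume.restrict (Ioc (-1) 1)) (W v) (fun t => g (v * t))
    ((intervalIntegrable_iff_integrableOn_Ioc_of_le (by norm_num)).1 hi)
    (Eventually.of_forall (hW0 v)) 
    (hgm.comp_quasiMeasurePreserving (aux_qmp v hv.ne')).restrict (g 0) (ε / 2)
    (by 
      filter_upwards [ae_restrict_mem measurableSet_Ioc] with t ht
      have : dist (v * t) 0 < δ := by
        rw [dist_zero_right, norm_eq_abs, abs_mul, abs_of_pos hv]
        have := abs_le.2 ⟨ht.1.le, ht.2⟩
        nlinarith
      exact (hd this).le)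
  rw [← intervalIntegral.integral_of_le (by norm_num),
    ← intervalIntegral.integral_of_le (by norm_num)] at hs
  rw [dist_eq, div_sub' hp.ne', abs_div, abs_of_pos hp, div_lt_iff₀ hp, mul_comm _ (g 0)]
  nlinarith

lemma aux_ae_ne : ∀ᵐ θ : ℝ, cos θ ≠ 0 ∧ sin θ ≠ 0 := by
  have h1 : ∀ᵐ θ : ℝ, cos θ ≠ 0 := by
    have : {θ : ℝ | cos θ = 0}.Countable := by
      refine (countable_range (fun k : ℤ => (2 * (k:ℝ) + 1) * π / 2)).mono fun θ hθ => ?_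
      obtain ⟨k, hk⟩ := cos_eq_zero_iff.1 hθ
      exact ⟨k, hk.symm⟩
    simpa using this.ae_notMem volume
  have h2 : ∀ᵐ θ : ℝ, sin θ ≠ 0 := by
    have : {θ : ℝ | sin θ = 0}.Countable := by
      refine (countable_range (fun k : ℤ => (k:ℝ) * π)).mono fun θ hθ => ?_
      obtain ⟨k, hk⟩ := sin_eq_zero_iff.1 hθ
      exact ⟨k, hk⟩
    simpa using this.ae_notMem volume
  exact h1.and h2

lemma aux_two (g gt : ℝ → ℝ) (hg_int : ∫ t, g t = 1) (hg_cont : ContinuousAt g 0) 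
    (hgt_int : ∫ t, gt t = 1) (hgt_cont : ContinuousAt gt 0) 
    (W : ℝ → ℝ → ℝ) (hW0 : ∀ v, ∀ x ∈ Ioc (0:ℝ) 1, 0 ≤ W v x) 
    (hpos : ∀ᶠ v in nhdsWithin (0:ℝ) (Ioi 0), 0 < ∫ x in (0:ℝ)..1, W v x) :
    Tendsto (fun v => (∫ θ in (0:ℝ)..(2*π), ∫ x in (0:ℝ)..1, 
      (g (v * x * cos θ) * gt (v * x * sin θ)) * W v x) / ∫ x in (0:ℝ)..1, W v x)
      (nhdsWithin (0:ℝ) (Ioi 0)) (nhds (2 * π * (g 0 * gt 0))) := by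
  have hgm : AEStronglyMeasurable g volume := 
    (Integrable.of_integral_ne_zero (by rw [hg_int]; simp)).1
  have hgtm : AEStronglyMeasurable gt volume := 
    (Integrable.of_integral_ne_zero (by rw [hgt_int]; simp)).1
  have hc : ContinuousAt (fun p : ℝ × ℝ => g p.1 * gt p.2) (0, 0) := 
    (ContinuousAt.comp (f := Prod.fst) (x := ((0:ℝ), (0:ℝ))) hg_cont continuousAt_fst).mul
     (ContinuousAt.comp (f := Prod.snd) (x := ((0:ℝ), (0:ℝ))) hgt_cont continuousAt_snd)
  have hπ := pi_pos
  rw [Metric.tendsto_nhds]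
  intro ε hε
  obtain ⟨δ, hδ, hd⟩ := Metric.continuousAt_iff.1 hc (ε / (4 * π)) (by positivity)
  filter_upwards [hpos, aux_ev δ hδ] with v hp ⟨hv, hv'⟩
  have hWi : Integrable (W v) (volume.restrict (Ioc 0 1)) := by
    rw [intervalIntegral.integral_of_le zero_le_one] at hp
    exact Integrable.of_integral_ne_zero hp.ne'
  set K := ∫ x in (0:ℝ)..1, W v x with hK
  have hq1 : ∀ c : ℝ, c ≠ 0 → Measure.QuasiMeasurePreserving (fun x : ℝ => v * x * c) 
      (volume.restrict (Ioc 0 1)) volume := by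
    intro c hc
    have := (aux_qmp (v * c) (by positivity)).mono_left
      (Measure.absolutelyContinuous_of_le (Measure.restrict_le_self (s := Ioc (0:ℝ) 1)))
    convert this using 2 with x
    ring
  have hin : ∀ᵐ θ ∂(volume.restrict (Ioc 0 (2 * π))), |(∫ x in (0:ℝ)..1, 
      (g (v * x * cos θ) * gt (v * x * sin θ)) * W v x) - (g 0 * gt 0) * K| ≤ ε / (4 * π) * K := by
    filter_upwards [ae_restrict_of_ae aux_ae_ne] with θ hθ
    have hs := aux_sand (volume.restrict (Ioc 0 1)) (W v) 
      (fun x => g (v * x * cos θ) * gt (v * x * sin θ)) hWi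
      (by filter_upwards [ae_restrict_mem measurableSet_Ioc] with x hx using hW0 v x hx)
      ((hgm.comp_quasiMeasurePreserving (hq1 _ hθ.1)).mul
        (hgtm.comp_quasiMeasurePreserving (hq1 _ hθ.2))) (g 0 * gt 0) (ε / (4 * π))
      (by
        filter_upwards [ae_restrict_mem measurableSet_Ioc] with x hx
        have key : ∀ c, |c| ≤ 1 → dist (v * x * c) 0 < δ := by
          intro c hc
          rw [dist_zero_right, norm_eq_abs, abs_mul, abs_mul, abs_of_pos hv, abs_of_pos hx.1]
          have : v * x * |c| ≤ v * 1 * 1 := by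
            have := hx.1
            have := hx.2
            gcongr
          linarith
        have : dist (v * x * cos θ, v * x * sin θ) ((0:ℝ), (0:ℝ)) < δ := by
          rw [Prod.dist_eq]
          exact max_lt (key _ (abs_cos_le_one θ)) (key _ (abs_sin_le_one θ))
        exact (hd this).le)
    rw [← intervalIntegral.integral_of_le (by norm_num),
      ← intervalIntegral.integral_of_le (by norm_num)] at hs
    exact hs
  have hJ : AEStronglyMeasurable (fun θ => ∫ x in (0:ℝ)..1, 
      (g (v * x * cos θ) * gt (v * x * sin θ)) * W v x) (volume.restrict (Ioc 0 (2 * π))) := by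
    simp_rw [intervalIntegral.integral_of_le zero_le_one]
    refine AEStronglyMeasurable.integral_prod_right' 
      (f := fun p : ℝ × ℝ => (g (v * p.2 * cos p.1) * gt (v * p.2 * sin p.1)) * W v p.2) ?_
    have hA : Measure.QuasiMeasurePreserving (fun p : ℝ × ℝ => v * p.2 * cos p.1)
      ((volume.restrict (Ioc 0 (2 * π))).prod (volume.restrict (Ioc 0 1))) volume :=
      QuasiMeasurePreserving.prod_of_right (by fun_prop) (by
        filter_upwards [ae_restrict_of_ae aux_ae_ne] with θ hθ using hq1 _ hθ.1)
    have hB : Measure.QuasiMeasurePreserving (fun p : ℝ × ℝ => v * p.2 * sin p.1)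
      ((volume.restrict (Ioc 0 (2 * π))).prod (volume.restrict (Ioc 0 1))) volume :=
      QuasiMeasurePreserving.prod_of_right (by fun_prop) (by
        filter_upwards [ae_restrict_of_ae aux_ae_ne] with θ hθ using hq1 _ hθ.2)
    exact ((hgm.comp_quasiMeasurePreserving hA).mul
      (hgtm.comp_quasiMeasurePreserving hB)).mul hWi.1.comp_snd
  have hs := aux_sand (volume.restrict (Ioc 0 (2 * π))) (fun _ => 1) _ (integrable_const _)
    (Eventually.of_forall fun _ => zero_le_one) hJ _ _ hin
  rw [← intervalIntegral.integral_of_le (by positivity),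
    ← intervalIntegral.integral_of_le (by positivity)] at hs
  simp only [mul_one, intervalIntegral.integral_const, smul_eq_mul, sub_zero] at hs
  rw [dist_eq, div_sub' hp.ne', abs_div, abs_of_pos hp, div_lt_iff₀ hp]
  have e1 : g 0 * gt 0 * K * (2 * π) = K * (2 * π * (g 0 * gt 0)) := by ring
  have e2 : ε / (4 * π) * K * (2 * π) = ε * K / 2 := by field_simp; norm_num
  rw [e1, e2] at hs
  nlinarith [mul_pos hε hp]

theorem stmt5 (g gt q ρ : ℝ → ℝ) (u₀ : ℝ) (hu₀ : 0 < u₀)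
    -- g is a bounded probability density, continuous at 0, with g(0) > 0
    (hg_nonneg : ∀ t, 0 ≤ g t) (hg_int : ∫ t, g t = 1)
    (hg_bdd : ∃ M, ∀ t, g t ≤ M) (hg_cont : ContinuousAt g 0) (hg0 : 0 < g 0)
    -- g̃ is a bounded probability density, continuous at 0, with g̃(0) > 0
    (hgt_nonneg : ∀ t, 0 ≤ gt t) (hgt_int : ∫ t, gt t = 1)
    (hgt_bdd : ∃ M, ∀ t, gt t ≤ M) (hgt_cont : ContinuousAt gt 0) (hgt0 : 0 < gt 0)
    -- q is a probability density on (0,∞), positive, C¹ and strictly increasing on (0,u₀],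
    -- in the class Γ at 0 with auxiliary ρ = q/q′, ρ nondecreasing and ρ(s)/s → 0
    (hq_nonneg : ∀ t, 0 ≤ q t) (hq_supp : ∀ t ≤ (0:ℝ), q t = 0)
    (hq_int : ∫ t in Set.Ioi (0:ℝ), q t = 1)
    (hq_pos : ∀ u ∈ Set.Ioc (0:ℝ) u₀, 0 < q u)
    (hq_C1 : ContDiffOn ℝ 1 q (Set.Ioc 0 u₀))
    (hq_mono : StrictMonoOn q (Set.Ioc 0 u₀))
    (hρdef : ∀ u ∈ Set.Ioc (0:ℝ) u₀, ρ u = q u / deriv q u)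
    (hρpos : ∀ u ∈ Set.Ioc (0:ℝ) u₀, 0 < ρ u)
    (hρmono : MonotoneOn ρ (Set.Ioc 0 u₀))
    (hρ0 : Tendsto (fun s => ρ s / s) (nhdsWithin 0 (Set.Ioi 0)) (nhds 0))
    (hΓ : ∀ x : ℝ, Tendsto (fun h => q (h + ρ h * x) / q h) (nhdsWithin 0 (Set.Ioi 0))
      (nhds (Real.exp x)))
    (m m₂ : ℝ → ℝ)
    (hm : ∀ v, m v =
      v * ∫ t in (-1:ℝ)..1, g (v * t) / Real.sqrt (1 - t^2) * q (v * Real.sqrt (1 - t^2)))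
    (hm₂ : ∀ v, m₂ v = v^2 * ∫ θ in (0:ℝ)..(2*π), ∫ x in (0:ℝ)..1,
        x / Real.sqrt (1 - x^2) * g (v * x * Real.cos θ) * gt (v * x * Real.sin θ) *
          q (v * Real.sqrt (1 - x^2))) :
    -- (i) m(v) ∼ Γ(1/2) √(2vρ(v)) g(0) q(v)
    (Tendsto (fun v => m v / (Real.Gamma (1/2) * Real.sqrt (2 * v * ρ v) * g 0 * q v))
      (nhdsWithin 0 (Set.Ioi 0)) (nhds 1)) ∧
    -- (ii) m₂(v) ∼ 2π g(0) g̃(0) v ρ(v) q(v)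
    (Tendsto (fun v => m₂ v / (2 * π * g 0 * gt 0 * (v * ρ v) * q v))
      (nhdsWithin 0 (Set.Ioi 0)) (nhds 1)) ∧
    -- (iii) if m belongs to the class Γ at 0, then ρ is an auxiliary function for m
    ((∃ σ : ℝ → ℝ, (∀ s, 0 < s → 0 < σ s) ∧
        Tendsto (fun s => σ s / s) (nhdsWithin 0 (Set.Ioi 0)) (nhds 0) ∧
        (∀ x : ℝ, Tendsto (fun h => m (h + σ h * x) / m h) (nhdsWithin 0 (Set.Ioi 0))
          (nhds (Real.exp x)))) →
      ∀ x : ℝ, Tendsto (fun v => m (v + ρ v * x) / m v) (nhdsWithin 0 (Set.Ioi 0))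
        (nhds (Real.exp x))) := by
  have hL := aux_log q ρ u₀ hq_pos hq_C1 hρdef hρpos hρmono
  have hdom := aux_dom q ρ u₀ hq_nonneg hq_supp hq_pos hρpos hL
  have hev := aux_ev u₀ hu₀
  obtain ⟨hC, hD⟩ := aux_dct q ρ u₀ hu₀ hq_nonneg hq_supp hq_int hρpos hρ0 hΓ hev hdom
  have hΓp : 0 < Gamma (1/2) := Gamma_pos_of_pos (by norm_num)
  have hπ := pi_pos
  have hi : Tendsto (fun v => m v / (Real.Gamma (1/2) * Real.sqrt (2 * v * ρ v) * g 0 * q v))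
      (nhdsWithin 0 (Set.Ioi 0)) (nhds 1) := by
    have hev1 : ∀ᶠ v in nhdsWithin (0:ℝ) (Ioi 0), 
        IntervalIntegrable (fun t => 1 / √(1 - t^2) * q (v * √(1 - t^2))) volume (-1) 1 ∧
        0 < (∫ t in (-1:ℝ)..1, 1 / √(1 - t^2) * q (v * √(1 - t^2))) ∧
        v * (∫ t in (-1:ℝ)..1, 1 / √(1 - t^2) * q (v * √(1 - t^2))) = 
          √(2 * v * ρ v) * q v * ∫ y in Ioi (0:ℝ), q (v - ρ v * y) / q v / √(y * (1 - ρ v / v * y / 2)) := by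
      filter_upwards [hev, hD.eventually (lt_mem_nhds hΓp)] with v hv hDp
      have hr := hρpos v ⟨hv.1, hv.2.le⟩
      have hq := hq_pos v ⟨hv.1, hv.2.le⟩
      have hv0 := hv.1
      have hh := aux_half q hq_supp v (ρ v) hv.1 hr hq.ne'
      set f : ℝ → ℝ := fun t => 1 / √(1 - t^2) * q (v * √(1 - t^2)) with hf
      have hfp : 0 < ∫ t in (0:ℝ)..1, f t := by
        have : 0 < v * ∫ t in (0:ℝ)..1, f t := by rw [hh]; positivity
        exact (mul_pos_iff_of_pos_left hv0).1 this
      have hfi : IntervalIntegrable f volume 0 1 := by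
        by_contra h
        rw [intervalIntegral.integral_undef h] at hfp
        exact lt_irrefl _ hfp
      have hfe : ∀ t, f (-t) = f t := by intro t; simp [hf]
      have hfi' : IntervalIntegrable f volume (-1) 0 := by
        have := hfi.comp_sub_left 0
        simp only [zero_sub, sub_zero, hfe] at this
        exact this.symm
      have e : ∫ t in (-1:ℝ)..0, f t = ∫ t in (0:ℝ)..1, f t := by
        have := intervalIntegral.integral_comp_neg (a := 0) (b := 1) f
        simp only [hfe, neg_zero] at this
        exact this.symm
      have e2 : ∫ t in (-1:ℝ)..1, f t = 2 * ∫ t in (0:ℝ)..1, f t := by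
        rw [← intervalIntegral.integral_add_adjacent_intervals hfi' hfi, e]; ring
      refine ⟨hfi'.trans hfi, by rw [e2]; positivity, ?_⟩
      rw [e2, mul_left_comm, hh]
      ring
    have h1 := aux_one g hg_int hg_cont (fun v t => 1 / √(1 - t^2) * q (v * √(1 - t^2)))
      (fun v x => mul_nonneg (by positivity) (hq_nonneg _))
      (hev1.mono fun v h => ⟨h.1, h.2.1⟩)
    have h2 := (h1.div_const (g 0)).mul (hD.div_const (Gamma (1/2)))
    rw [div_self hg0.ne', div_self hΓp.ne', mul_one] at h2
    refine h2.congr' ?_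
    filter_upwards [hev, hev1] with v hv ⟨_, hp, he⟩
    have hr := hρpos v ⟨hv.1, hv.2.le⟩
    have hq := hq_pos v ⟨hv.1, hv.2.le⟩
    have hv0 := hv.1
    have hs : 0 < √(2 * v * ρ v) := by positivity
    rw [hm]
    have e : ∀ t, g (v * t) / √(1 - t ^ 2) * q (v * √(1 - t ^ 2)) = 
      g (v * t) * (1 / √(1 - t^2) * q (v * √(1 - t^2))) := fun t => by ring
    simp_rw [e]
    generalize (∫ t in (-1:ℝ)..1, g (v * t) * (1 / √(1 - t^2) * q (v * √(1 - t^2)))) = A at *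
    generalize (∫ t in (-1:ℝ)..1, (1 / √(1 - t^2) * q (v * √(1 - t^2)))) = B at *
    generalize (∫ y in Ioi (0:ℝ), q (v - ρ v * y) / q v / √(y * (1 - ρ v / v * y / 2))) = D at *
    have hD' : D = v * B / (√(2 * v * ρ v) * q v) := by
      rw [he]; field_simp
    rw [hD']
    field_simp
  refine ⟨hi, ?_, fun _ x => ?_⟩
  · have hev2 : ∀ᶠ v in nhdsWithin (0:ℝ) (Ioi 0), 
        0 < (∫ x in (0:ℝ)..1, x / √(1 - x^2) * q (v * √(1 - x^2))) := by
      filter_upwards [hev, hC.eventually (lt_mem_nhds one_pos)] with v hv hCp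
      have hr := hρpos v ⟨hv.1, hv.2.le⟩
      have hq := hq_pos v ⟨hv.1, hv.2.le⟩
      have hh := aux_K q hq_supp v (ρ v) hv.1 hr hq.ne'
      refine (mul_pos_iff_of_pos_left hv.1).1 ?_
      rw [hh]; positivity
    have h1 := aux_two g gt hg_int hg_cont hgt_int hgt_cont 
      (fun v x => x / √(1 - x^2) * q (v * √(1 - x^2)))
      (fun v x hx => mul_nonneg (div_nonneg hx.1.le (sqrt_nonneg _)) (hq_nonneg _)) hev2
    have h2 := (h1.div_const (2 * π * (g 0 * gt 0))).mul hC
    rw [div_self (by positivity), mul_one] at h2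
    refine h2.congr' ?_
    filter_upwards [hev, hev2] with v hv hp
    have hr := hρpos v ⟨hv.1, hv.2.le⟩
    have hq := hq_pos v ⟨hv.1, hv.2.le⟩
    have hv0 := hv.1
    have he := aux_K q hq_supp v (ρ v) hv.1 hr hq.ne'
    rw [hm₂]
    have e : ∀ θ x, x / √(1 - x^2) * g (v * x * cos θ) * gt (v * x * sin θ) * q (v * √(1 - x^2)) =
      (g (v * x * cos θ) * gt (v * x * sin θ)) * (x / √(1 - x^2) * q (v * √(1 - x^2))) := 
      fun θ x => by ring
    simp_rw [e]
    generalize (∫ θ in (0:ℝ)..(2*π), ∫ x in (0:ℝ)..1, 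
      (g (v * x * cos θ) * gt (v * x * sin θ)) * (x / √(1 - x^2) * q (v * √(1 - x^2)))) = A at *
    generalize (∫ x in (0:ℝ)..1, x / √(1 - x^2) * q (v * √(1 - x^2))) = B at *
    generalize (∫ y in Ioi (0:ℝ), q (v - ρ v * y) / q v) = D at *
    have hD' : D = v * B / (ρ v * q v) := by
      rw [he]; field_simp
    rw [hD']
    field_simp
  · obtain ⟨hw1, hw2⟩ := aux_w_s5 ρ hρ0 x
    have hrr := aux_rho q ρ u₀ hu₀ hq_pos hρpos hρ0 hΓ hL x
    have h1 := ((hi.comp hw2).div hi one_ne_zero).mul ((hw1.mul hrr).sqrt.mul (hΓ x))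
    simp only [div_one, one_mul, mul_one, sqrt_one] at h1
    refine h1.congr' ?_
    filter_upwards [hev, hw2.eventually hev] with v hv hw
    have hr := hρpos v ⟨hv.1, hv.2.le⟩
    have hq := hq_pos v ⟨hv.1, hv.2.le⟩
    have hr' := hρpos _ ⟨hw.1, hw.2.le⟩
    have hq' := hq_pos _ ⟨hw.1, hw.2.le⟩
    have hv0 := hv.1
    have hw0 := hw.1
    simp only [Pi.div_apply, Function.comp_apply]
    generalize v + ρ v * x = w at *
    have e : √(w / v * (ρ w / ρ v)) = √(2 * w * ρ w) / √(2 * v * ρ v) := by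
      rw [← sqrt_div (by positivity)]
      congr 1
      field_simp
    rw [e]
    have hs : 0 < √(2 * v * ρ v) := by positivity
    have hs' : 0 < √(2 * w * ρ w) := by positivity
    field_simp
end

section
/- Let (τ_i)_{i≥1} and (s_i)_{i≥1} be real sequences and let (e_i)_{i≥1} be the standard orthonormal basis of ℓ²(ℕ). Consider the operator R with matrix entries ⟨R e_i, e_j⟩ = τ_i τ_j for i ≠ j and ⟨R e_i, e_i⟩ = τ_i² + s_i, i.e. Rx = ⟨τ, x⟩ τ + (s_i x_i)_{i≥1}. Then: (i) if ∑_i τ_i² < ∞ and ∑_i s_i² < ∞, R is a bounded self-adjoint operator on ℓ² with ∑_i ‖R e_i‖² < ∞ (R is Hilbert–Schmidt); (ii) if ∑_i τ_i² < ∞ and (s_i) is bounded, R is a bounded self-adjoint operator; (iii) if ∑_i τ_i² < ∞ and s_i → 0, R is compact; (iv) if (s_i) is unbounded, or if (s_i) is bounded and ∑_i τ_i² = ∞, then there is no bounded linear operator T on ℓ² with ⟨T e_i, e_j⟩ = τ_i τ_j for all i ≠ j and ⟨T e_i, e_i⟩ = τ_i² + s_i for all i. -/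
open Filter Set
open scoped RealInnerProductSpace



lemma aux_norm_le {C : ℝ} (hC : 0 ≤ C) (x y : (lp (fun _ : ℕ => ℝ) 2)) (h : ∀ i, |y i| ≤ C * |x i|) :
    ‖y‖ ≤ C * ‖x‖ := by
  have h1 : ‖y‖ ≤ ‖C • x‖ := by
    apply lp.norm_mono (by norm_num)
    intro i
    simpa [abs_mul, abs_of_nonneg hC] using h i
  rwa [norm_smul, Real.norm_eq_abs, abs_of_nonneg hC] at h1

lemma aux_diag (s : ℕ → ℝ) {C : ℝ} (hs : ∀ i, |s i| ≤ C) :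
    ∃ D : (lp (fun _ : ℕ => ℝ) 2) →L[ℝ] (lp (fun _ : ℕ => ℝ) 2), ∀ x i, (D x) i = s i * x i := by
  have hC : 0 ≤ C := (abs_nonneg _).trans (hs 0)
  have key : ∀ x : (lp (fun _ : ℕ => ℝ) 2), Memℓp (fun i => s i * x i) 2 := by
    intro x
    refine (lp.memℓp (C • x)).mono' ?_
    intro i
    simp only [lp.coeFn_smul, Pi.smul_apply, smul_eq_mul, Real.norm_eq_abs, abs_mul,
      abs_of_nonneg hC]
    exact mul_le_mul_of_nonneg_right (hs i) (abs_nonneg _)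
  let D : (lp (fun _ : ℕ => ℝ) 2) →ₗ[ℝ] (lp (fun _ : ℕ => ℝ) 2) :=
    { toFun := fun x => ⟨fun i => s i * x i, key x⟩
      map_add' := by
        intro x y
        ext i
        simp [mul_add]
        rfl
      map_smul' := by
        intro c x
        ext i
        simp [mul_left_comm] }
  refine ⟨D.mkContinuous C ?_, fun x i => rfl⟩
  intro x
  apply aux_norm_le hC
  intro i
  change |s i * x i| ≤ _
  rw [abs_mul]
  exact mul_le_mul_of_nonneg_right (hs i) (abs_nonneg _)

lemma aux_tau (τ : ℕ → ℝ) (h : Summable (fun i => τ i ^ 2)) :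
    ∃ t : (lp (fun _ : ℕ => ℝ) 2), ∀ i, t i = τ i := by
  have : Memℓp τ 2 := by
    apply memℓp_gen
    simpa using h
  exact ⟨⟨τ, this⟩, fun i => rfl⟩

/-- The rank one operator. -/
noncomputable def auxRank (u : (lp (fun _ : ℕ => ℝ) 2)) : (lp (fun _ : ℕ => ℝ) 2) →L[ℝ] (lp (fun _ : ℕ => ℝ) 2) := (innerSL ℝ u).smulRight u

lemma auxRank_apply (u x : (lp (fun _ : ℕ => ℝ) 2)) : auxRank u x = ⟪u, x⟫ • u := rfl

lemma auxRank_compact (u : (lp (fun _ : ℕ => ℝ) 2)) : IsCompactOperator (auxRank u) := by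
  have h := (isCompactOperator_of_locallyCompactSpace_dom (innerSL ℝ u)).clm_comp
    (ContinuousLinearMap.toSpanSingleton ℝ u)
  exact h

lemma aux_main (τ s : ℕ → ℝ) (hτ : Summable (fun i => τ i ^ 2)) {C : ℝ} (hs : ∀ i, |s i| ≤ C) :
    ∃ (t : (lp (fun _ : ℕ => ℝ) 2)) (D R : (lp (fun _ : ℕ => ℝ) 2) →L[ℝ] (lp (fun _ : ℕ => ℝ) 2)), (∀ i, t i = τ i) ∧ (∀ x i, (D x) i = s i * x i) ∧
      R = auxRank t + D ∧
      (∀ i j, ⟪R (lp.single 2 i (1:ℝ)), (lp.single 2 j (1:ℝ) : (lp (fun _ : ℕ => ℝ) 2))⟫ =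
        if i = j then τ i ^ 2 + s i else τ i * τ j) ∧
      (∀ x y, ⟪R x, y⟫ = ⟪x, R y⟫) := by
  obtain ⟨t, ht⟩ := aux_tau τ hτ
  obtain ⟨D, hD⟩ := aux_diag s hs
  refine ⟨t, D, auxRank t + D, ht, hD, rfl, ?_, ?_⟩
  · intro i j
    rw [lp.inner_single_right]
    simp only [_root_.add_apply, auxRank_apply, lp.inner_single_right, lp.coeFn_add,
      Pi.add_apply, lp.coeFn_smul, Pi.smul_apply, hD, ht]
    by_cases hij : i = j
    · subst hij
      simp [lp.single_apply]
      ring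
    · have : j ≠ i := fun h => hij h.symm
      simp [lp.single_apply, hij, this]
      try ring
  · intro x y
    have h1 : ⟪D x, y⟫ = ⟪x, D y⟫ := by
      rw [lp.inner_eq_tsum, lp.inner_eq_tsum]
      congr 1
      ext i
      rw [hD, hD]
      simp
      ring
    simp only [_root_.add_apply, auxRank_apply, inner_add_left, inner_add_right, h1,
      inner_smul_left, inner_smul_right]
    rw [real_inner_comm t x]
    simp
    try ring

lemma aux_diag_compact (s : ℕ → ℝ) (hs : Tendsto s atTop (nhds 0)) (D : (lp (fun _ : ℕ => ℝ) 2) →L[ℝ] (lp (fun _ : ℕ => ℝ) 2))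
    (hD : ∀ x i, (D x) i = s i * x i) : IsCompactOperator D := by
  let F : ℕ → (lp (fun _ : ℕ => ℝ) 2) →L[ℝ] (lp (fun _ : ℕ => ℝ) 2) := fun n => ∑ i ∈ Finset.range n, s i • auxRank (lp.single 2 i (1:ℝ))
  have hF : ∀ n x j, (F n x) j = if j < n then s j * x j else 0 := by
    intro n x j
    induction n with
    | zero => simp [F]
    | succ n ih =>
      have : F (n+1) = F n + s n • auxRank (lp.single 2 n (1:ℝ)) := Finset.sum_range_succ _ _
      rw [this]
      simp only [_root_.add_apply, lp.coeFn_add, Pi.add_apply, ih,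
        _root_.smul_apply, auxRank_apply, lp.inner_single_left, lp.coeFn_smul,
        Pi.smul_apply, lp.single_apply]
      rcases lt_trichotomy j n with h | h | h
      · simp [h, h.ne, Nat.lt_succ_of_lt h]
      · subst h
        simp
      · simp [h.not_gt, h.ne', show ¬ j < n + 1 by omega]
  refine isCompactOperator_of_tendsto (F := F) (l := atTop) ?_ (Eventually.of_forall ?_)
  · rw [Metric.tendsto_atTop]
    intro ε hε
    obtain ⟨N, hN⟩ := (Metric.tendsto_atTop.1 hs) (ε / 2) (by positivity)
    refine ⟨N, fun n hn => ?_⟩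
    rw [dist_eq_norm]
    refine lt_of_le_of_lt (ContinuousLinearMap.opNorm_le_bound _ (by positivity : 0 ≤ ε / 2) ?_)
      (by linarith)
    intro x
    apply aux_norm_le (by positivity)
    intro i
    simp only [_root_.sub_apply, lp.coeFn_sub, Pi.sub_apply, hF, hD]
    split_ifs with h
    · simp only [sub_self, abs_zero]
      positivity
    · have := hN i (by omega)
      rw [Real.dist_eq, sub_zero] at this
      rw [zero_sub, abs_neg, abs_mul]
      exact mul_le_mul_of_nonneg_right this.le (abs_nonneg _)
  · intro n
    change F n ∈ compactOperator (RingHom.id ℝ) (lp (fun _ : ℕ => ℝ) 2) (lp (fun _ : ℕ => ℝ) 2)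
    exact Submodule.sum_mem _ fun i _ => Submodule.smul_mem _ _ (auxRank_compact _)

lemma aux_bdd {s : ℕ → ℝ} (h : BddAbove (Set.range fun i => |s i|)) : ∃ C, ∀ i, |s i| ≤ C := by
  obtain ⟨C, hC⟩ := h
  exact ⟨C, fun i => hC ⟨i, rfl⟩⟩

lemma aux_bdd_of_tendsto {s : ℕ → ℝ} (h : Tendsto s atTop (nhds 0)) : ∃ C, ∀ i, |s i| ≤ C := by
  have h2 := h.abs
  exact aux_bdd h2.bddAbove_range

/-- Proposition `nova` and surrounding remarks: properties of the operator
`R = τ⊗τ + diag(s)` on `ℓ²(ℕ)`, with matrix entries `⟨R e_i, e_j⟩ = τ_iτ_j` for `i ≠ j`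
and `⟨R e_i, e_i⟩ = τ_i² + s_i`. -/
theorem stmt8 (τ s : ℕ → ℝ)
    (e : ℕ → lp (fun _ : ℕ => ℝ) 2) (he : ∀ i, e i = lp.single 2 i (1:ℝ)) :
    -- (i) Hilbert–Schmidt case
    ((Summable (fun i => τ i ^ 2) → Summable (fun i => s i ^ 2) →
      ∃ R : lp (fun _ : ℕ => ℝ) 2 →L[ℝ] lp (fun _ : ℕ => ℝ) 2,
        (∀ i j, ⟪R (e i), e j⟫ = if i = j then τ i ^ 2 + s i else τ i * τ j) ∧
        (∀ x y, ⟪R x, y⟫ = ⟪x, R y⟫) ∧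
        Summable (fun i => ‖R (e i)‖ ^ 2)) ∧
    -- (ii) bounded case
    ((Summable (fun i => τ i ^ 2) → BddAbove (Set.range fun i => |s i|) →
      ∃ R : lp (fun _ : ℕ => ℝ) 2 →L[ℝ] lp (fun _ : ℕ => ℝ) 2,
        (∀ i j, ⟪R (e i), e j⟫ = if i = j then τ i ^ 2 + s i else τ i * τ j) ∧
        (∀ x y, ⟪R x, y⟫ = ⟪x, R y⟫))) ∧
    -- (iii) compact case
    ((Summable (fun i => τ i ^ 2) → Tendsto s atTop (nhds 0) →
      ∃ R : lp (fun _ : ℕ => ℝ) 2 →L[ℝ] lp (fun _ : ℕ => ℝ) 2,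
        (∀ i j, ⟪R (e i), e j⟫ = if i = j then τ i ^ 2 + s i else τ i * τ j) ∧
        IsCompactOperator R)) ∧
    -- (iv) unbounded case
    ((¬ BddAbove (Set.range fun i => |s i|) ∨
        (BddAbove (Set.range fun i => |s i|) ∧ ¬ Summable (fun i => τ i ^ 2))) →
      ¬ ∃ T : lp (fun _ : ℕ => ℝ) 2 →L[ℝ] lp (fun _ : ℕ => ℝ) 2,
        ∀ i j, ⟪T (e i), e j⟫ = if i = j then τ i ^ 2 + s i else τ i * τ j)) := by
  obtain rfl : e = fun i => lp.single 2 i (1:ℝ) := funext he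
  refine ⟨?_, ?_, ?_, ?_⟩
  · intro hτ hs
    have hs0 : Tendsto s atTop (nhds 0) := by
      have := hs.tendsto_atTop_zero
      have h2 := this.sqrt
      simp only [Real.sqrt_sq_eq_abs, Real.sqrt_zero] at h2
      exact (tendsto_zero_iff_abs_tendsto_zero _).2 h2
    obtain ⟨C, hC⟩ := aux_bdd_of_tendsto hs0
    obtain ⟨t, D, R, ht, hD, hR, h1, h2⟩ := aux_main τ s hτ hC
    refine ⟨R, h1, h2, ?_⟩
    refine Summable.of_nonneg_of_le (fun i => by positivity) (fun i => ?_)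
      (((hτ.mul_right (‖t‖ ^ 2)).add hs).mul_left 2)
    have h3 : ‖R (lp.single 2 i (1:ℝ))‖ ≤ |τ i| * ‖t‖ + |s i| := by
      have h4 : D (lp.single 2 i (1:ℝ)) = s i • lp.single 2 i (1:ℝ) := by
        ext j
        rw [hD]
        by_cases h : j = i
        · subst h
          simp
        · simp [lp.single_apply, h]
      have h5 : R (lp.single 2 i (1:ℝ)) = τ i • t + s i • lp.single 2 i (1:ℝ) := by
        rw [hR, _root_.add_apply, h4, auxRank_apply, lp.inner_single_right, ht]
        simp
      rw [h5]
      refine (norm_add_le _ _).trans (le_of_eq ?_)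
      rw [norm_smul, norm_smul, lp.norm_single (by norm_num)]
      simp
    calc ‖R (lp.single 2 i (1:ℝ))‖ ^ 2 ≤ (|τ i| * ‖t‖ + |s i|) ^ 2 := by gcongr
      _ ≤ 2 * ((|τ i| * ‖t‖) ^ 2 + |s i| ^ 2) := add_sq_le
      _ = _ := by rw [mul_pow, sq_abs, sq_abs]
  · intro hτ hs
    obtain ⟨C, hC⟩ := aux_bdd hs
    obtain ⟨t, D, R, ht, hD, hR, h1, h2⟩ := aux_main τ s hτ hC
    exact ⟨R, h1, h2⟩
  · intro hτ hs
    obtain ⟨C, hC⟩ := aux_bdd_of_tendsto hs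
    obtain ⟨t, D, R, ht, hD, hR, h1, h2⟩ := aux_main τ s hτ hC
    refine ⟨R, h1, ?_⟩
    rw [hR]
    exact (auxRank_compact t).add (aux_diag_compact s hs D hD)
  · rintro h ⟨T, hT⟩
    simp only [lp.inner_single_right] at hT
    have hT' : ∀ i j, (T (lp.single 2 i (1:ℝ))) j =
        if i = j then τ i ^ 2 + s i else τ i * τ j := by
      intro i j
      rw [← hT]
      simp
    have hb : ∀ i j, |(T (lp.single 2 i (1:ℝ))) j| ≤ ‖T‖ := by
      intro i j
      refine (lp.norm_apply_le_norm (by norm_num) (T (lp.single 2 i (1:ℝ))) j).trans ?_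
      refine (T.le_opNorm _).trans (le_of_eq ?_)
      rw [lp.norm_single (by norm_num)]
      simp
    set M := ‖T‖ with hM
    have hM0 : 0 ≤ M := norm_nonneg _
    have hd : ∀ i, |τ i ^ 2 + s i| ≤ M := by
      intro i
      have := hb i i
      rwa [hT', if_pos rfl] at this
    have ho : ∀ i j, i ≠ j → |τ i| * |τ j| ≤ M := by
      intro i j hij
      have := hb i j
      rwa [hT', if_neg hij, abs_mul] at this
    rcases h with h | ⟨-, h⟩
    · have hbig : ∀ K : ℝ, ∃ i, K < τ i ^ 2 := by
        intro K
        by_contra! hK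
        apply h
        refine ⟨M + K, ?_⟩
        rintro _ ⟨i, rfl⟩
        have h1 := abs_le.1 (hd i)
        have h2 := hK i
        have h3 := sq_nonneg (τ i)
        exact abs_le.2 ⟨by linarith, by linarith⟩
      obtain ⟨i, hi⟩ := hbig ((M + 1) ^ 2)
      obtain ⟨j, hj⟩ := hbig (τ i ^ 2)
      have hij : i ≠ j := by
        rintro rfl
        exact lt_irrefl _ hj
      have h1 : M + 1 < |τ i| := by
        have := sq_lt_sq.1 hi
        rwa [abs_of_nonneg (by linarith)] at this
      have h2 : |τ i| < |τ j| := sq_lt_sq.1 hj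
      have := ho i j hij
      nlinarith
    · have : ∃ i, τ i ≠ 0 := by
        by_contra! h0
        apply h
        simp [h0, summable_zero]
      obtain ⟨i, hi⟩ := this
      apply h
      have hsum : Summable (fun j => (T (lp.single 2 i (1:ℝ))) j ^ 2) := by
        have := (lp.memℓp (T (lp.single 2 i (1:ℝ)))).summable (by norm_num)
        simpa using this
      have h3 := hsum.mul_left ((τ i ^ 2)⁻¹)
      refine (summable_congr_cofinite ?_).1 h3
      have : ∀ᶠ j in cofinite, j ≠ i := (Set.finite_singleton i).compl_mem_cofinite
      filter_upwards [this] with j hj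
      rw [hT', if_neg (fun h => hj h.symm)]
      field_simp
end

section
/- Let (λ_i)_{i≥1} be positive reals with ∑_i λ_i < ∞, and for each i define the symmetric probability density f_i(x) = (6/3⁶)·(1/λ_i²)·(27 λ_i^{3/2} − |x|³) for |x| ≤ 3 λ_i^{1/2} and f_i(x) = 0 otherwise. Let (x_i)_{i≥1} be real numbers with |x_i| < 3 λ_i^{1/2} for all i and ∑_i x_i²/λ_i³ < ∞. Then both ∑_i (f_i″(x_i)/f_i(x_i))² < ∞ and ∑_i (f_i′(x_i)/f_i(x_i))² < ∞ hold. -/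
open Filter Real Set

lemma aux_d1 (t : ℝ) : HasDerivAt (fun u : ℝ => u * |u|) (2 * |t|) t := by
  rcases lt_trichotomy t 0 with h | h | h
  · have h1 := (hasDerivAt_id t).mul (hasDerivAt_abs_neg h)
    refine h1.congr_deriv ?_
    simp [abs_of_neg h]; ring
  · subst h
    rw [hasDerivAt_iff_tendsto_slope_zero]
    have h1 : Tendsto (fun u : ℝ => |u|) (nhdsWithin 0 {0}ᶜ) (nhds (2 * |(0:ℝ)|)) := by
      have := (continuous_abs.tendsto (0:ℝ)).mono_left (nhdsWithin_le_nhds (s := {0}ᶜ))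
      simpa using this
    refine h1.congr' ?_
    filter_upwards [self_mem_nhdsWithin] with u hu
    have hu : u ≠ 0 := hu
    simp [hu]
  · have h1 := (hasDerivAt_id t).mul (hasDerivAt_abs_pos h)
    refine h1.congr_deriv ?_
    simp [abs_of_pos h]; ring

lemma aux_d3 (t : ℝ) : HasDerivAt (fun u : ℝ => |u| ^ 3) (3 * (t * |t|)) t := by
  have h1 := (hasDerivAt_id t).mul (aux_d1 t)
  have h2 : (fun u : ℝ => |u| ^ 3) = (id * fun u : ℝ => u * |u|) := by
    funext u
    have := sq_abs u
    simp only [Pi.mul_apply, id]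
    calc |u|^3 = |u|^2 * |u| := by ring
      _ = _ := by rw [this]; ring
  rw [h2]
  refine h1.congr_deriv ?_
  simp; ring

lemma aux_f (c K r : ℝ) (f : ℝ → ℝ)
    (hf : ∀ t, f t = if |t| ≤ r then c * (K - |t| ^ 3) else 0) (t : ℝ) (ht : |t| < r) :
    deriv f t = - (c * (3 * (t * |t|))) ∧ iteratedDeriv 2 f t = - (c * (6 * |t|)) := by
  have hev : ∀ t, |t| < r → ∀ᶠ u in nhds t, |u| < r := fun t ht =>
    (isOpen_lt continuous_abs continuous_const).mem_nhds ht
  have hd : ∀ t, |t| < r → deriv f t = - (c * (3 * (t * |t|))) := by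
    intro t ht
    have h1 := ((aux_d3 t).const_sub K).const_mul c
    have h2 : f =ᶠ[nhds t] fun u => c * (K - |u| ^ 3) := by
      filter_upwards [hev t ht] with u hu
      rw [hf, if_pos hu.le]
    rw [(h1.congr_of_eventuallyEq h2).deriv]; ring
  refine ⟨hd t ht, ?_⟩
  rw [iteratedDeriv_succ, iteratedDeriv_one]
  have h2 : deriv f =ᶠ[nhds t] fun u => - (c * (3 * (u * |u|))) := by
    filter_upwards [hev t ht] with u hu using hd u hu
  have h1 := (((aux_d1 t).const_mul 3).const_mul c).neg
  rw [(HasDerivAt.congr_of_eventuallyEq h1 h2).deriv]; ring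

/-- for the densities
`f_i(x) = (6/3⁶)(1/λ_i²)(27λ_i^{3/2} − |x|³) 1{|x| ≤ 3λ_i^{1/2}}` and points `x_i` with
`|x_i| < 3√λ_i` and `∑ x_i²/λ_i³ < ∞`, both `∑ (f_i″(x_i)/f_i(x_i))² < ∞` and
`∑ (f_i′(x_i)/f_i(x_i))² < ∞` hold. -/
theorem stmt10 (lam x : ℕ → ℝ) (hpos : ∀ i, 0 < lam i) (hsum : Summable lam)
    (f : ℕ → ℝ → ℝ)
    (hf : ∀ i t, f i t = if |t| ≤ 3 * Real.sqrt (lam i) then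
        (6 / 3^6) * (1 / (lam i)^2) * (27 * (lam i * Real.sqrt (lam i)) - |t|^3) else 0)
    (hx : ∀ i, |x i| < 3 * Real.sqrt (lam i))
    (hxs : Summable fun i => (x i)^2 / (lam i)^3) :
    Summable (fun i => (iteratedDeriv 2 (f i) (x i) / f i (x i))^2) ∧
    Summable (fun i => (deriv (f i) (x i) / f i (x i))^2) := by
  have e1 : ∀ᶠ i in atTop, lam i < 1 := hsum.tendsto_atTop_zero.eventually_lt_const one_pos
  have e2 : ∀ᶠ i in atTop, (x i)^2 / (lam i)^3 < 1 :=
    hxs.tendsto_atTop_zero.eventually_lt_const one_pos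
  have key : ∀ᶠ i in atTop,
      (iteratedDeriv 2 (f i) (x i) / f i (x i))^2 ≤ (x i)^2 / (lam i)^3 ∧
      (deriv (f i) (x i) / f i (x i))^2 ≤ (x i)^2 / (lam i)^3 := by
    filter_upwards [e1, e2] with i h1 h2
    obtain ⟨d1, d2⟩ := aux_f _ _ _ (f i) (hf i) (x i) (hx i)
    have hfi := hf i (x i)
    rw [if_pos (hx i).le] at hfi
    rw [d1, d2, hfi]
    have hl := hpos i
    set s := Real.sqrt (lam i) with hs
    have hs0 : 0 < s := Real.sqrt_pos.2 hl
    have hss : lam i = s ^ 2 := (Real.sq_sqrt hl.le).symm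
    have hs1 : s < 1 := by nlinarith
    set a := |x i| with ha
    have ha0 : 0 ≤ a := abs_nonneg _
    have hxa : (x i)^2 = a^2 := (sq_abs _).symm
    have hc : (6 / 3^6 : ℝ) * (1 / (lam i)^2) ≠ 0 := by positivity
    generalize (6 / 3^6 : ℝ) * (1 / (lam i)^2) = c at hc
    rw [neg_div, neg_div, neg_sq, neg_sq, mul_div_mul_left _ _ hc, mul_div_mul_left _ _ hc,
      div_pow, div_pow]
    rw [div_lt_one (by positivity), hxa, hss] at h2
    have has : a < s ^ 3 := lt_of_pow_lt_pow_left₀ 2 (by positivity) (by linarith [h2, (by ring : (s^2)^3 = (s^3)^2)])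
    have hs3 : s ^ 3 ≤ s := by
      have := pow_le_pow_of_le_one hs0.le hs1.le (show 1 ≤ 3 by norm_num)
      simpa using this
    have ha3 : a ^ 3 ≤ s ^ 3 := pow_le_pow_left₀ ha0 (by linarith) 3
    have hD : 6 * s ^ 3 ≤ 27 * (lam i * s) - a ^ 3 := by
      rw [hss]; nlinarith [pow_pos hs0 3]
    have hD2 : (6 * s ^ 3) ^ 2 ≤ (27 * (lam i * s) - a ^ 3) ^ 2 :=
      pow_le_pow_left₀ (by positivity) hD 2
    have hb : ∀ n : ℝ, n ≤ 36 * a ^ 2 → n / (27 * (lam i * s) - a ^ 3) ^ 2 ≤ (x i)^2 / (lam i)^3 := by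
      intro n hn
      calc n / (27 * (lam i * s) - a ^ 3) ^ 2 ≤ (36 * a ^ 2) / (6 * s ^ 3) ^ 2 :=
            div_le_div₀ (by positivity) hn (by positivity) hD2
        _ = (x i)^2 / (lam i)^3 := by rw [hxa, hss]; field_simp; ring
    refine ⟨hb _ (by nlinarith), hb _ ?_⟩
    have : (3 * (x i * a))^2 = 9 * (a ^ 2 * a ^ 2) := by
      rw [mul_pow, mul_pow, hxa]; ring
    rw [this]
    have : a ^ 2 ≤ 1 := by nlinarith
    nlinarith [sq_nonneg a]
  have nn : ∀ g : ℕ → ℝ, (∀ᶠ i in atTop, (g i)^2 ≤ (x i)^2 / (lam i)^3) →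
      Summable fun i => (g i)^2 := by
    intro g hg
    refine Summable.of_norm_bounded_eventually_nat hxs ?_
    filter_upwards [hg] with i hi
    rwa [Real.norm_of_nonneg (sq_nonneg _)]
  exact ⟨nn _ (key.mono fun i h => h.1), nn _ (key.mono fun i h => h.2)⟩
end

section
/- Let Y be a nonnegative real random variable whose cumulative distribution function F(h) = P(Y ≤ h) satisfies F(h) > 0 for all h > 0 and belongs to the class Γ at 0 with auxiliary function ρ, where ρ is nondecreasing near 0 and ρ(s)/s → 0 as s → 0⁺. Let the kernel K : [0,∞) → [0,∞) be bounded, supported on [0,1], continuously differentiable on [0,1] with bounded derivative, and K(1) > 0. Define v(h) = E[K(Y/h)·Y·ρ(Y)]. Then v(h)/E[K(Y/h)·Y²] → 0 as h → 0⁺. -/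
open MeasureTheory Filter Real Set

/-- first part of Proposition `Compay`: with
`v(h) = E[K(Y/h)·Y·ρ(Y)]`, one has `v(h)/E[K(Y/h)·Y²] → 0` as `h → 0⁺`. -/
theorem stmt11 {Ω : Type*} [MeasurableSpace Ω] (P : Measure Ω) [IsProbabilityMeasure P]
    (Y : Ω → ℝ) (hYmeas : Measurable Y) (hYnonneg : ∀ ω, 0 ≤ Y ω)
    (F ρ : ℝ → ℝ) (hF : ∀ h, F h = (P {ω | Y ω ≤ h}).toReal)
    (hFpos : ∀ h, 0 < h → 0 < F h)
    (hρmeas : Measurable ρ) (hρpos : ∀ s, 0 < s → 0 < ρ s)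
    (hρmono : ∃ δ > 0, MonotoneOn ρ (Set.Ioc 0 δ))
    (hρ0 : Tendsto (fun s => ρ s / s) (nhdsWithin 0 (Set.Ioi 0)) (nhds 0))
    (hΓ : ∀ x : ℝ, Tendsto (fun h => F (h + ρ h * x) / F h) (nhdsWithin 0 (Set.Ioi 0))
      (nhds (Real.exp x)))
    (K : ℝ → ℝ) (hK_nonneg : ∀ s, 0 ≤ K s) (hK_bdd : ∃ M, ∀ s, K s ≤ M)
    (hK_supp : ∀ s, 1 < s → K s = 0)
    (hK_C1 : ContDiffOn ℝ 1 K (Set.Icc 0 1))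
    (hK_deriv_bdd : ∃ M, ∀ s ∈ Set.Icc (0:ℝ) 1, |derivWithin K (Set.Icc 0 1) s| ≤ M)
    (hK1 : 0 < K 1) :
    Tendsto (fun h =>
        (∫ ω, K (Y ω / h) * Y ω * ρ (Y ω) ∂P) / (∫ ω, K (Y ω / h) * (Y ω)^2 ∂P))
      (nhdsWithin 0 (Set.Ioi 0)) (nhds 0) := by
  obtain ⟨M, hM⟩ := hK_bdd
  have hKm : Measurable (fun s => Set.piecewise (Set.Icc (0:ℝ) 1) K (fun _ => 0) s) :=
    ContinuousOn.measurable_piecewise hK_C1.continuousOn continuousOn_const measurableSet_Icc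
  rw [Metric.tendsto_nhds]
  intro ε hε
  have h1 := (Metric.tendsto_nhds.1 hρ0) (ε / 2) (by positivity)
  rw [eventually_nhdsWithin_iff, Metric.eventually_nhds_iff] at h1
  obtain ⟨δ, hδ, hρδ⟩ := h1
  rw [eventually_nhdsWithin_iff, Metric.eventually_nhds_iff]
  refine ⟨δ, hδ, fun h hhδ hh => ?_⟩
  have hh0 : 0 < h := hh
  have hhd : h < δ := by
    rw [Real.dist_eq, sub_zero, abs_of_pos hh0] at hhδ
    exact hhδ
  have hM0 : 0 ≤ M := (hK_nonneg 0).trans (hM 0)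
  have hKeq : ∀ ω, K (Y ω / h) = Set.piecewise (Set.Icc (0:ℝ) 1) K (fun _ => 0) (Y ω / h) := by
    intro ω
    have h0 : 0 ≤ Y ω / h := div_nonneg (hYnonneg ω) hh0.le
    by_cases hy : Y ω / h ≤ 1
    · rw [Set.piecewise_eq_of_mem _ _ _ (show Y ω / h ∈ Set.Icc (0:ℝ) 1 from ⟨h0, hy⟩)]
    · rw [Set.piecewise_eq_of_notMem _ _ _ (show Y ω / h ∉ Set.Icc (0:ℝ) 1 from fun hc => hy hc.2), hK_supp _ (not_le.1 hy)]
  have hmeas : Measurable (fun ω => K (Y ω / h) * (Y ω)^2) := by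
    simp only [hKeq]
    exact (hKm.comp (hYmeas.div_const h)).mul (hYmeas.pow_const 2)
  have hbd : ∀ ω, ‖K (Y ω / h) * (Y ω)^2‖ ≤ M * h^2 := by
    intro ω
    rw [Real.norm_of_nonneg (mul_nonneg (hK_nonneg _) (sq_nonneg _))]
    by_cases hy : Y ω / h ≤ 1
    · have hy' : Y ω ≤ h := by rwa [div_le_one hh0] at hy
      exact mul_le_mul (hM _) (pow_le_pow_left₀ (hYnonneg ω) hy' 2) (sq_nonneg _) hM0
    · rw [hK_supp _ (not_le.1 hy), zero_mul]
      positivity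
  have hint : Integrable (fun ω => K (Y ω / h) * (Y ω)^2) P :=
    Integrable.of_bound hmeas.aestronglyMeasurable (M * h^2) (Eventually.of_forall hbd)
  have hf0 : ∀ ω, 0 ≤ K (Y ω / h) * Y ω * ρ (Y ω) := by
    intro ω
    rcases (hYnonneg ω).eq_or_lt with hy | hy
    · rw [← hy]; simp
    · exact mul_nonneg (mul_nonneg (hK_nonneg _) hy.le) (hρpos _ hy).le
  have hle : ∀ ω, K (Y ω / h) * Y ω * ρ (Y ω) ≤ ε / 2 * (K (Y ω / h) * (Y ω)^2) := by
    intro ω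
    rcases (hYnonneg ω).eq_or_lt with hy | hy
    · rw [← hy]; simp
    · by_cases hy1 : Y ω / h ≤ 1
      · have hy' : Y ω ≤ h := by rwa [div_le_one hh0] at hy1
        have h2 := @hρδ (Y ω) (by rw [Real.dist_eq, sub_zero, abs_of_pos hy]; linarith) hy
        rw [Real.dist_eq, sub_zero] at h2
        have h3 : ρ (Y ω) ≤ ε / 2 * Y ω := by
          rw [← div_le_iff₀ hy]
          exact (le_abs_self _).trans h2.le
        calc K (Y ω / h) * Y ω * ρ (Y ω) ≤ K (Y ω / h) * Y ω * (ε / 2 * Y ω) :=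
              mul_le_mul_of_nonneg_left h3 (mul_nonneg (hK_nonneg _) hy.le)
          _ = _ := by ring
      · rw [hK_supp _ (not_le.1 hy1)]; simp
  have hI : (∫ ω, K (Y ω / h) * Y ω * ρ (Y ω) ∂P) ≤ ε / 2 * ∫ ω, K (Y ω / h) * (Y ω)^2 ∂P := by
    rw [← integral_const_mul]
    exact integral_mono_of_nonneg (Eventually.of_forall hf0) (hint.const_mul _)
      (Eventually.of_forall hle)
  have hN : 0 ≤ ∫ ω, K (Y ω / h) * Y ω * ρ (Y ω) ∂P := integral_nonneg hf0
  have hD : 0 ≤ ∫ ω, K (Y ω / h) * (Y ω)^2 ∂P :=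
    integral_nonneg fun ω => mul_nonneg (hK_nonneg _) (sq_nonneg _)
  rw [Real.dist_eq, sub_zero, abs_of_nonneg (div_nonneg hN hD)]
  have := div_le_of_le_mul₀ hD (by positivity : (0:ℝ) ≤ ε / 2) hI
  linarith
end

section
/- Let Y be a nonnegative real random variable whose cumulative distribution function F(h) = P(Y ≤ h) satisfies F(h) > 0 for all h > 0 and belongs to the class Γ at 0 with auxiliary function ρ, where ρ is nondecreasing near 0 and ρ(s)/s → 0 as s → 0⁺. Let the kernel K : [0,∞) → [0,∞) be bounded, supported on [0,1], continuously differentiable on [0,1] with bounded derivative, and K(1) > 0. Assume in addition that ρ is continuously differentiable near 0 and there is d > 0 with t ρ′(t)/ρ(t) → d as t → 0⁺ (so ρ is regularly varying at 0 with positive index d). Then v(h) = E[K(Y/h)·Y·ρ(Y)] satisfies v(h) ∼ K(1)·h·ρ(h)·F(h) as h → 0⁺, i.e. the ratio of the two sides tends to 1. -/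
open MeasureTheory Filter Real Set

lemma aux_rho_s12 (ρ : ℝ → ℝ) (hρpos : ∀ s, 0 < s → 0 < ρ s)
    (hρmono : ∃ δ > 0, MonotoneOn ρ (Set.Ioc 0 δ))
    (hρC1 : ∃ δ > 0, ContDiffOn ℝ 1 ρ (Set.Ioc 0 δ))
    (d : ℝ) (hd : 0 < d)
    (hreg : Tendsto (fun t => t * deriv ρ t / ρ t) (nhdsWithin 0 (Set.Ioi 0)) (nhds d)) :
    ∃ δ > 0, MonotoneOn ρ (Set.Ioc 0 δ) ∧ ∀ h, 0 < h → h < δ → ∀ t, h / 2 ≤ t → t ≤ h →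
      ρ h - ρ t ≤ 2 * (d + 1) * ρ h / h * (h - t) := by
  obtain ⟨δ1, hδ1, hm⟩ := hρmono
  obtain ⟨δ2, hδ2, hc⟩ := hρC1
  have h3 : ∀ᶠ t in nhdsWithin (0:ℝ) (Set.Ioi 0), t * deriv ρ t / ρ t < d + 1 :=
    hreg.eventually_lt_const (by linarith)
  obtain ⟨δ3, hδ3, h3⟩ := mem_nhdsGT_iff_exists_Ioo_subset.1 h3
  have hδ3' : (0:ℝ) < δ3 := hδ3
  refine ⟨min δ1 (min δ2 δ3), by positivity, hm.mono (Ioc_subset_Ioc_right (min_le_left _ _)), ?_⟩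
  intro h hh hlt t ht1 ht2
  have hl1 : h < δ1 := lt_of_lt_of_le hlt (min_le_left _ _)
  have hl2 : h < δ2 := lt_of_lt_of_le hlt ((min_le_right _ _).trans (min_le_left _ _))
  have hl3 : h < δ3 := lt_of_lt_of_le hlt ((min_le_right _ _).trans (min_le_right _ _))
  have hsub : Icc t h ⊆ Ioc 0 δ2 := fun s hs => ⟨by linarith [hs.1], by linarith [hs.2]⟩
  refine Convex.image_sub_le_mul_sub_of_deriv_le (convex_Icc t h) (hc.continuousOn.mono hsub)
    ((hc.differentiableOn (by norm_num)).mono (interior_subset.trans hsub)) ?_ t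
    (left_mem_Icc.2 ht2) h (right_mem_Icc.2 ht2) ht2
  intro s hs
  rw [interior_Icc] at hs
  have hs0 : 0 < s := by linarith [hs.1]
  have hb : s * deriv ρ s / ρ s < d + 1 := h3 ⟨hs0, by linarith [hs.2]⟩
  have hρs := hρpos s hs0
  have hρh := hρpos h hh
  rw [div_lt_iff₀ hρs] at hb
  have hmon : ρ s ≤ ρ h := hm ⟨hs0, by linarith [hs.2]⟩ ⟨hh, hl1.le⟩ hs.2.le
  rw [le_div_iff₀ hh]
  by_cases hD : deriv ρ s ≤ 0
  · have : 0 ≤ 2 * (d + 1) * ρ h := by positivity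
    nlinarith
  · push Not at hD
    have : deriv ρ s * h ≤ 2 * (s * deriv ρ s) := by nlinarith [hs.1]
    nlinarith

lemma aux_F (F ρ : ℝ → ℝ) (hFm : Monotone F)
    (hFpos : ∀ h, 0 < h → 0 < F h)
    (hρ0 : Tendsto (fun s => ρ s / s) (nhdsWithin 0 (Set.Ioi 0)) (nhds 0))
    (hΓ : ∀ x : ℝ, Tendsto (fun h => F (h + ρ h * x) / F h) (nhdsWithin 0 (Set.Ioi 0))
      (nhds (Real.exp x))) (c ε : ℝ) (hc : c < 1) (hε : 0 < ε) :
    ∀ᶠ h in nhdsWithin (0:ℝ) (Set.Ioi 0), F (c * h) ≤ ε * F h := by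
  obtain ⟨x, hx0, hx⟩ : ∃ x : ℝ, x < 0 ∧ Real.exp x < ε := by
    have := (Real.tendsto_exp_atBot.eventually_lt_const hε).and (eventually_lt_atBot (0:ℝ))
    obtain ⟨x, h1, h2⟩ := this.exists
    exact ⟨x, h2, h1⟩
  have h2 : Tendsto (fun s => ρ s / s * x) (nhdsWithin 0 (Set.Ioi 0)) (nhds 0) := by
    simpa using hρ0.mul_const x
  filter_upwards [(hΓ x).eventually_lt_const hx,
    h2.eventually_const_lt (show c - 1 < 0 by linarith), self_mem_nhdsWithin] with h e1 e2 e3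
  have hh : (0:ℝ) < h := e3
  rw [div_lt_iff₀ (hFpos h hh)] at e1
  refine (hFm ?_).trans e1.le
  have : (c - 1) * h < ρ h / h * x * h := mul_lt_mul_of_pos_right e2 hh
  have e : ρ h / h * x * h = ρ h * x := by field_simp
  linarith

/-- second part of Proposition `Compay`: if moreover `ρ` is regularly
varying at 0 with positive index `d`, then `v(h) = E[K(Y/h)·Y·ρ(Y)] ∼ K(1)·h·ρ(h)·F(h)`
as `h → 0⁺`. -/
theorem stmt12 {Ω : Type*} [MeasurableSpace Ω] (P : Measure Ω) [IsProbabilityMeasure P]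
    (Y : Ω → ℝ) (hYmeas : Measurable Y) (hYnonneg : ∀ ω, 0 ≤ Y ω)
    (F ρ : ℝ → ℝ) (hF : ∀ h, F h = (P {ω | Y ω ≤ h}).toReal)
    (hFpos : ∀ h, 0 < h → 0 < F h)
    (hρmeas : Measurable ρ) (hρpos : ∀ s, 0 < s → 0 < ρ s)
    (hρmono : ∃ δ > 0, MonotoneOn ρ (Set.Ioc 0 δ))
    (hρ0 : Tendsto (fun s => ρ s / s) (nhdsWithin 0 (Set.Ioi 0)) (nhds 0))
    (hΓ : ∀ x : ℝ, Tendsto (fun h => F (h + ρ h * x) / F h) (nhdsWithin 0 (Set.Ioi 0))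
      (nhds (Real.exp x)))
    (K : ℝ → ℝ) (hK_nonneg : ∀ s, 0 ≤ K s) (hK_bdd : ∃ M, ∀ s, K s ≤ M)
    (hK_supp : ∀ s, 1 < s → K s = 0)
    (hK_C1 : ContDiffOn ℝ 1 K (Set.Icc 0 1))
    (hK_deriv_bdd : ∃ M, ∀ s ∈ Set.Icc (0:ℝ) 1, |derivWithin K (Set.Icc 0 1) s| ≤ M)
    (hK1 : 0 < K 1)
    -- ρ is C¹ near 0 and regularly varying at 0 with positive index d
    (hρC1 : ∃ δ > 0, ContDiffOn ℝ 1 ρ (Set.Ioc 0 δ))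
    (d : ℝ) (hd : 0 < d)
    (hreg : Tendsto (fun t => t * deriv ρ t / ρ t) (nhdsWithin 0 (Set.Ioi 0)) (nhds d)) :
    Tendsto (fun h =>
        (∫ ω, K (Y ω / h) * Y ω * ρ (Y ω) ∂P) / (K 1 * h * ρ h * F h))
      (nhdsWithin 0 (Set.Ioi 0)) (nhds 1) := by
  obtain ⟨M, hM⟩ := hK_bdd
  obtain ⟨δ, hδ, hmono, hmvt⟩ := aux_rho_s12 ρ hρpos hρmono hρC1 d hd hreg
  have hFr : ∀ h, F h = P.real {ω | Y ω ≤ h} := hF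
  have hFm : Monotone F := by
    intro a b hab
    rw [hFr, hFr]
    exact measureReal_mono (fun ω (hω : Y ω ≤ a) => hω.trans hab)
  have hM0 : 0 < M := hK1.trans_le (hM 1)
  have hKm : Measurable ((Icc (0:ℝ) 1).piecewise K (fun _ => 0)) :=
    hK_C1.continuousOn.measurable_piecewise continuousOn_const measurableSet_Icc
  rw [Metric.tendsto_nhds]
  intro e he
  -- choose the tolerance
  set ε := K 1 * e / 4 with hεdef
  have hε : 0 < ε := by positivity
  have hKc : ∃ η > 0, ∀ s, 1 - η ≤ s → s ≤ 1 → 0 ≤ s → |K s - K 1| ≤ ε := by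
    have := Metric.continuousWithinAt_iff.1
      (hK_C1.continuousOn 1 (right_mem_Icc.2 zero_le_one)) ε hε
    obtain ⟨η, hη, h1⟩ := this
    refine ⟨η / 2, by positivity, fun s a b c => ?_⟩
    have := h1 ⟨c, b⟩ (by rw [Real.dist_eq, abs_lt]; constructor <;> linarith)
    rw [Real.dist_eq] at this
    exact this.le
  obtain ⟨η1, hη1, hKη⟩ := hKc
  obtain ⟨η, hη, hηa, hηb, hηc⟩ : ∃ η : ℝ, 0 < η ∧ η ≤ η1 ∧ η ≤ 1 / 2 ∧
      K 1 * (η + 2 * (d + 1) * η) ≤ ε := by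
    refine ⟨min η1 (min (1/2) (ε / (K 1 * (1 + 2 * (d + 1))))), by positivity, min_le_left _ _,
      (min_le_right _ _).trans (min_le_left _ _), ?_⟩
    have := (min_le_right η1 _).trans (min_le_right (1/2) (ε / (K 1 * (1 + 2 * (d + 1)))))
    rw [le_div_iff₀ (by positivity)] at this
    linarith
  have hFc := aux_F F ρ hFm hFpos hρ0 hΓ (1 - η) (ε / M) (by linarith) (by positivity)
  filter_upwards [hFc, Ioo_mem_nhdsGT hδ] with h hFh hhδ
  have hh : 0 < h := hhδ.1
  have hρh := hρpos h hh
  have hFh0 := hFpos h hh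
  set A := {ω | Y ω ≤ h} with hA
  set B := {ω | Y ω ≤ (1 - η) * h} with hB
  have hAm : MeasurableSet A := measurableSet_le hYmeas measurable_const
  have hBm : MeasurableSet B := measurableSet_le hYmeas measurable_const
  set G : Ω → ℝ := fun ω => K (Y ω / h) * Y ω * ρ (Y ω) with hG
  have hGm : Measurable G := by
    have : (fun ω => K (Y ω / h)) =
        fun ω => ((Icc (0:ℝ) 1).piecewise K (fun _ => 0)) (Y ω / h) := by
      funext ω
      by_cases h1 : Y ω / h ∈ Icc (0:ℝ) 1
      · rw [piecewise_eq_of_mem _ _ _ h1]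
      · rw [piecewise_eq_of_notMem _ _ _ h1]
        apply hK_supp
        by_contra h2
        exact h1 ⟨div_nonneg (hYnonneg ω) hh.le, not_lt.1 h2⟩
    have h2 : Measurable (fun ω => K (Y ω / h)) := by
      rw [this]; exact hKm.comp (hYmeas.div_const h)
    exact (h2.mul hYmeas).mul (hρmeas.comp hYmeas)
  -- elementary bounds
  have hbd : ∀ ω, Y ω ≤ h → 0 ≤ Y ω * ρ (Y ω) ∧ Y ω * ρ (Y ω) ≤ h * ρ h := by
    intro ω hω
    rcases (hYnonneg ω).eq_or_lt with h0 | h0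
    · rw [← h0]; simp; positivity
    · have := hρpos _ h0
      have h3 : ρ (Y ω) ≤ ρ h := hmono ⟨h0, by linarith [hhδ.2]⟩ ⟨hh, hhδ.2.le⟩ hω
      exact ⟨by positivity, mul_le_mul hω h3 this.le hh.le⟩
  have hout : ∀ ω, ¬ Y ω ≤ h → G ω = 0 := by
    intro ω hω
    have : K (Y ω / h) = 0 := hK_supp _ (by rw [lt_div_iff₀ hh]; linarith)
    simp [hG, this]
  have hG0 : ∀ ω, Y ω ≤ h → 0 ≤ G ω ∧ G ω ≤ M * (h * ρ h) := by
    intro ω hω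
    obtain ⟨h1, h2⟩ := hbd ω hω
    have h3 : G ω = K (Y ω / h) * (Y ω * ρ (Y ω)) := by simp only [hG]; ring
    rw [h3]
    exact ⟨mul_nonneg (hK_nonneg _) h1, mul_le_mul (hM _) h2 h1 hM0.le⟩
  have hGi : Integrable G P := by
    refine Integrable.of_bound hGm.aestronglyMeasurable (M * (h * ρ h)) (ae_of_all _ fun ω => ?_)
    rw [Real.norm_eq_abs]
    by_cases hω : Y ω ≤ h
    · rw [abs_of_nonneg (hG0 ω hω).1]; exact (hG0 ω hω).2
    · rw [hout ω hω]; simp; positivity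
  have hpt : ∀ ω, |G ω - A.indicator (fun _ => K 1 * h * ρ h) ω| ≤
      A.indicator (fun _ => 2 * ε * (h * ρ h)) ω + B.indicator (fun _ => M * (h * ρ h)) ω := by
    intro ω
    by_cases hω : Y ω ≤ h
    · have hωA : ω ∈ A := hω
      rw [indicator_of_mem hωA, indicator_of_mem hωA]
      by_cases hω2 : Y ω ≤ (1 - η) * h
      · have hωB : ω ∈ B := hω2
        rw [indicator_of_mem hωB]
        have h1 := hG0 ω hω
        have h2 : K 1 * h * ρ h ≤ M * (h * ρ h) := by
          rw [mul_assoc]; exact mul_le_mul_of_nonneg_right (hM 1) (by positivity)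
        have h3 : 0 ≤ K 1 * h * ρ h := by positivity
        have h4 : 0 ≤ 2 * ε * (h * ρ h) := by positivity
        rw [abs_le]; constructor <;> linarith [h1.1, h1.2]
      · have hωB : ω ∉ B := hω2
        rw [indicator_of_notMem hωB, add_zero]
        push Not at hω2
        have hhalf : h / 2 ≤ Y ω := by nlinarith
        have hY0 : 0 < Y ω := by linarith
        have h1 := hmvt h hh hhδ.2 (Y ω) hhalf hω
        set t := Y ω with ht
        have hρt := hρpos t hY0
        have hKt : |K (t / h) - K 1| ≤ ε := by
          apply hKη
          · rw [le_div_iff₀ hh]; nlinarith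
          · rw [div_le_one hh]; exact hω
          · positivity
        obtain ⟨hb1, hb2⟩ := hbd ω hω
        rw [← ht] at hb1 hb2
        have h2 : ρ h - ρ t ≤ 2 * (d + 1) * η * ρ h := by
          refine h1.trans ?_
          rw [div_mul_eq_mul_div, div_le_iff₀ hh]
          have : 2 * (d + 1) * ρ h * (h - t) ≤ 2 * (d + 1) * ρ h * (η * h) :=
            mul_le_mul_of_nonneg_left (by linarith) (by positivity)
          linarith
        have h5 : h * ρ h - t * ρ t ≤ (η + 2 * (d + 1) * η) * (h * ρ h) := by
          have a1 : h * (ρ h - ρ t) ≤ h * (2 * (d + 1) * η * ρ h) :=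
            mul_le_mul_of_nonneg_left h2 hh.le
          have a2 : ρ t ≤ ρ h := hmono ⟨hY0, by linarith [hhδ.2]⟩ ⟨hh, hhδ.2.le⟩ hω
          have a3 : (h - t) * ρ t ≤ (η * h) * ρ h :=
            mul_le_mul (by linarith) a2 hρt.le (by positivity)
          linarith
        have h6 : K 1 * (h * ρ h - t * ρ t) ≤ ε * (h * ρ h) := by
          calc _ ≤ K 1 * ((η + 2 * (d + 1) * η) * (h * ρ h)) :=
                mul_le_mul_of_nonneg_left h5 hK1.le
            _ = K 1 * (η + 2 * (d + 1) * η) * (h * ρ h) := by ring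
            _ ≤ _ := mul_le_mul_of_nonneg_right hηc (by positivity)
        have h7 : |(K (t / h) - K 1) * (t * ρ t)| ≤ ε * (h * ρ h) := by
          rw [abs_mul, abs_of_nonneg hb1]
          exact mul_le_mul hKt hb2 hb1 hε.le
        have h8 : 0 ≤ K 1 * (h * ρ h - t * ρ t) := mul_nonneg hK1.le (by linarith)
        have h9 : G ω - K 1 * h * ρ h =
            (K (t / h) - K 1) * (t * ρ t) - K 1 * (h * ρ h - t * ρ t) := by
          simp only [hG, ← ht]; ring
        rw [h9]
        rw [abs_le] at h7 ⊢
        constructor <;> linarith [h7.1, h7.2]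
    · have hωA : ω ∉ A := hω
      have hωB : ω ∉ B := fun (hb : Y ω ≤ (1 - η) * h) => hω (by nlinarith)
      rw [indicator_of_notMem hωA, indicator_of_notMem hωA, indicator_of_notMem hωB, hout ω hω]
      simp
  have hiA : ∀ c : ℝ, Integrable (A.indicator (fun _ => c)) P := fun c =>
    (integrable_const c).indicator hAm
  have hiB : ∀ c : ℝ, Integrable (B.indicator (fun _ => c)) P := fun c =>
    (integrable_const c).indicator hBm
  have hcA : ∀ c : ℝ, ∫ ω, A.indicator (fun _ => c) ω ∂P = F h * c := fun c => by
    rw [integral_indicator_const c hAm, hFr, smul_eq_mul]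
  have hcB : ∀ c : ℝ, ∫ ω, B.indicator (fun _ => c) ω ∂P = F ((1 - η) * h) * c := fun c => by
    rw [integral_indicator_const c hBm, hFr, smul_eq_mul]
  have hbound1 : |∫ ω, G ω ∂P - F h * (K 1 * h * ρ h)| ≤
      F h * (2 * ε * (h * ρ h)) + F ((1 - η) * h) * (M * (h * ρ h)) := by
    rw [← hcA, ← hcA, ← hcB, ← integral_add (hiA _) (hiB _), ← integral_sub hGi (hiA _)]
    exact (abs_integral_le_integral_abs).trans
      (integral_mono (hGi.sub (hiA _)).abs ((hiA _).add (hiB _)) hpt)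
  have hbound2 : |∫ ω, G ω ∂P - F h * (K 1 * h * ρ h)| ≤ 3 * ε * (h * ρ h * F h) := by
    refine hbound1.trans ?_
    have : F ((1 - η) * h) * (M * (h * ρ h)) ≤ ε / M * F h * (M * (h * ρ h)) :=
      mul_le_mul_of_nonneg_right hFh (by positivity)
    have e2 : ε / M * F h * (M * (h * ρ h)) = ε * (h * ρ h * F h) := by field_simp
    linarith
  have hD : 0 < K 1 * h * ρ h * F h := by positivity
  rw [Real.dist_eq, div_sub_one hD.ne', abs_div, abs_of_pos hD, div_lt_iff₀ hD]
  have e3 : K 1 * h * ρ h * F h = F h * (K 1 * h * ρ h) := by ring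
  calc _ = |∫ ω, G ω ∂P - F h * (K 1 * h * ρ h)| := by rw [← e3]
    _ ≤ 3 * ε * (h * ρ h * F h) := hbound2
    _ < e * (K 1 * h * ρ h * F h) := by
      have : 3 * ε * (h * ρ h * F h) = 3 / 4 * (e * (K 1 * h * ρ h * F h)) := by
        rw [hεdef]; ring
      rw [this]
      have : 0 < e * (K 1 * h * ρ h * F h) := by positivity
      linarith
end

section
/- Let Y be a nonnegative real random variable whose cumulative distribution function F(h) = P(Y ≤ h) satisfies F(h) > 0 for all h > 0 and F(hs)/F(h) → 0 as h → 0⁺ for every fixed s ∈ [0,1) (which holds in particular when F belongs to the class Γ at 0). Let the kernel K : [0,∞) → [0,∞) be bounded, supported on [0,1], continuously differentiable on [0,1] with bounded derivative, and K(1) > 0. Then for all integers m ≥ 1 and p ≥ 0, E[K(Y/h)^m · Y^p] ∼ K(1)^m · h^p · F(h) as h → 0⁺, i.e. the ratio of the two sides tends to 1. -/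
open MeasureTheory Filter Real Set


theorem aux_D {Ω : Type*} [MeasurableSpace Ω] (P : Measure Ω) [IsProbabilityMeasure P]
    (Y : Ω → ℝ) (hYmeas : Measurable Y) (hYnonneg : ∀ ω, 0 ≤ Y ω)
    (F : ℝ → ℝ) (hF : ∀ h, F h = (P {ω | Y ω ≤ h}).toReal)
    (hFpos : ∀ h, 0 < h → 0 < F h)
    (hF0 : ∀ s : ℝ, 0 ≤ s → s < 1 →
      Tendsto (fun h => F (h * s) / F h) (nhdsWithin 0 (Set.Ioi 0)) (nhds 0))
    (g : ℝ → ℝ) (hg : ContinuousOn g (Set.Icc 0 1)) (hg1 : g 1 = 0) :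
    Tendsto (fun h => (∫ ω, (Set.Icc (0:ℝ) 1).indicator g (Y ω / h) ∂P) / F h)
      (nhdsWithin 0 (Set.Ioi 0)) (nhds 0) := by
  obtain ⟨C, hC⟩ := isCompact_Icc.exists_bound_of_continuousOn hg
  have hC0 : 0 ≤ C := (norm_nonneg _).trans (hC 1 (by simp))
  rw [Metric.tendsto_nhds]
  intro ε hε
  have h1 := Metric.continuousWithinAt_iff.1 (hg 1 (by simp)) (ε / 2) (by positivity)
  obtain ⟨δ, hδ, hd⟩ := h1
  set s : ℝ := max 0 (1 - δ / 2) with hs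
  have hs0 : 0 ≤ s := le_max_left _ _
  have hs1 : s < 1 := max_lt (by norm_num) (by linarith)
  have hsd : 1 - δ / 2 ≤ s := le_max_right _ _
  have hev := (Metric.tendsto_nhds.1 (hF0 s hs0 hs1)) (ε / (2 * (C + 1))) (by positivity)
  filter_upwards [hev, self_mem_nhdsWithin] with h hh hpos
  have hpos : 0 < h := hpos
  have hFh := hFpos h hpos
  have hms : ∀ a : ℝ, MeasurableSet {ω | Y ω ≤ a} := fun a => measurableSet_le hYmeas measurable_const
  have hint : ∀ a c : ℝ, Integrable ({ω | Y ω ≤ a}.indicator (fun _ => c)) P :=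
    fun a c => (integrable_const c).indicator (hms a)
  have hval : ∀ a c : ℝ, ∫ ω, ({ω | Y ω ≤ a}.indicator (fun _ => c)) ω ∂P = F a * c := by
    intro a c
    rw [integral_indicator_const _ (hms a), hF a]; rfl
  have hbd : ‖∫ ω, (Set.Icc (0:ℝ) 1).indicator g (Y ω / h) ∂P‖ ≤
      F h * (ε / 2) + F (h * s) * C := by
    rw [← hval, ← hval, ← integral_add (hint _ _) (hint _ _)]
    apply norm_integral_le_of_norm_le ((hint _ _).add (hint _ _))
    refine Eventually.of_forall fun ω => ?_
    have hn2 : 0 ≤ ({ω | Y ω ≤ h * s}.indicator (fun _ => C)) ω :=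
      Set.indicator_nonneg (fun _ _ => hC0) _
    have hn1 : 0 ≤ ({ω | Y ω ≤ h}.indicator (fun _ => ε / 2)) ω :=
      Set.indicator_nonneg (fun _ _ => by positivity) _
    rw [Pi.add_apply]
    by_cases hm : Y ω / h ∈ Set.Icc (0:ℝ) 1
    · rw [Set.indicator_of_mem hm]
      have hle : Y ω ≤ h := by
        have := hm.2
        rwa [div_le_one hpos] at this
      by_cases h2 : Y ω ≤ h * s
      · have e : ({ω | Y ω ≤ h * s}.indicator (fun _ => C)) ω = C := by simp [h2]
        have := hC _ hm
        linarith
      · have e : ({ω | Y ω ≤ h}.indicator (fun _ => ε / 2)) ω = ε / 2 := by simp [hle]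
        have hlt : s < Y ω / h := by
          rw [lt_div_iff₀ hpos]; push Not at h2; linarith
        have := hd hm (by rw [Real.dist_eq, abs_lt]; constructor <;> linarith [hm.2])
        rw [hg1, dist_zero_right] at this
        linarith
    · rw [Set.indicator_of_notMem hm, norm_zero]
      linarith
  rw [dist_zero_right, Real.norm_eq_abs, abs_div, abs_of_pos hFh, div_lt_iff₀ hFh]
  rw [dist_zero_right, Real.norm_eq_abs, abs_div, abs_of_pos hFh, div_lt_iff₀ hFh] at hh
  rw [Real.norm_eq_abs] at hbd
  have h3 : F (h * s) * (C + 1) < ε / 2 * F h := by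
    have h4 := lt_of_le_of_lt (le_abs_self _) hh
    calc F (h * s) * (C + 1) < ε / (2 * (C + 1)) * F h * (C + 1) := by gcongr
      _ = ε / 2 * F h := by field_simp
  have h5 : 0 ≤ F (h * s) := by rw [hF]; exact ENNReal.toReal_nonneg
  linarith

/-- Lemma `free`: if the c.d.f. `F` of `Y ≥ 0` satisfies `F(hs)/F(h) → 0`
for every fixed `s ∈ [0,1)`, then for all integers `m ≥ 1` and `p ≥ 0`,
`E[K(Y/h)^m · Y^p] ∼ K(1)^m · h^p · F(h)` as `h → 0⁺`. -/
theorem stmt13 {Ω : Type*} [MeasurableSpace Ω] (P : Measure Ω) [IsProbabilityMeasure P]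
    (Y : Ω → ℝ) (hYmeas : Measurable Y) (hYnonneg : ∀ ω, 0 ≤ Y ω)
    (F : ℝ → ℝ) (hF : ∀ h, F h = (P {ω | Y ω ≤ h}).toReal)
    (hFpos : ∀ h, 0 < h → 0 < F h)
    (hF0 : ∀ s : ℝ, 0 ≤ s → s < 1 →
      Tendsto (fun h => F (h * s) / F h) (nhdsWithin 0 (Set.Ioi 0)) (nhds 0))
    (K : ℝ → ℝ) (hK_nonneg : ∀ s, 0 ≤ K s) (hK_bdd : ∃ M, ∀ s, K s ≤ M)
    (hK_supp : ∀ s, 1 < s → K s = 0)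
    (hK_C1 : ContDiffOn ℝ 1 K (Set.Icc 0 1))
    (hK_deriv_bdd : ∃ M, ∀ s ∈ Set.Icc (0:ℝ) 1, |derivWithin K (Set.Icc 0 1) s| ≤ M)
    (hK1 : 0 < K 1) :
    ∀ m : ℕ, 1 ≤ m → ∀ p : ℕ,
      Tendsto (fun h =>
          (∫ ω, (K (Y ω / h)) ^ m * (Y ω) ^ p ∂P) / ((K 1) ^ m * h ^ p * F h))
        (nhdsWithin 0 (Set.Ioi 0)) (nhds 1) := by
  intro m hm p
  have hKc : ContinuousOn K (Set.Icc 0 1) := hK_C1.continuousOn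
  have hgc : ContinuousOn (fun t => K t ^ m * t ^ p - K 1 ^ m) (Set.Icc 0 1) := by fun_prop
  have key := aux_D P Y hYmeas hYnonneg F hF hFpos hF0 _ hgc (by simp)
  have hK1m : 0 < K 1 ^ m := by positivity
  have k2 := (key.div_const (K 1 ^ m)).add_const 1
  rw [zero_div, zero_add] at k2
  refine k2.congr' ?_
  filter_upwards [self_mem_nhdsWithin] with h hpos
  have hpos : 0 < h := hpos
  have hFh := hFpos h hpos
  have hms : MeasurableSet {ω | Y ω ≤ h} := measurableSet_le hYmeas measurable_const
  have hint : Integrable ({ω | Y ω ≤ h}.indicator (fun _ => K 1 ^ m)) P :=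
    (integrable_const _).indicator hms
  have hval : ∫ ω, ({ω | Y ω ≤ h}.indicator (fun _ => K 1 ^ m)) ω ∂P = F h * K 1 ^ m := by
    rw [integral_indicator_const _ hms, hF h]; rfl
  set g := (fun t => K t ^ m * t ^ p - K 1 ^ m) with hg
  have hgm : Measurable ((Set.Icc (0:ℝ) 1).indicator g) := by
    classical
    rw [← Set.piecewise_eq_indicator]
    exact hgc.measurable_piecewise continuousOn_const measurableSet_Icc
  have hgi : Integrable (fun ω => (Set.Icc (0:ℝ) 1).indicator g (Y ω / h)) P := by
    obtain ⟨C, hC⟩ := isCompact_Icc.exists_bound_of_continuousOn hgc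
    have hC0 : 0 ≤ C := (norm_nonneg _).trans (hC 1 (by simp))
    refine Integrable.of_bound (hgm.comp (hYmeas.div_const h)).aestronglyMeasurable C
      (Eventually.of_forall fun ω => ?_)
    by_cases hm : Y ω / h ∈ Set.Icc (0:ℝ) 1
    · rw [Set.indicator_of_mem hm]; exact hC _ hm
    · rw [Set.indicator_of_notMem hm, norm_zero]; exact hC0
  have hI : ∫ ω, (K (Y ω / h)) ^ m * (Y ω) ^ p ∂P =
      h ^ p * ((∫ ω, (Set.Icc (0:ℝ) 1).indicator g (Y ω / h) ∂P) + F h * K 1 ^ m) := by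
    rw [← hval, ← integral_add hgi hint, ← integral_const_mul]
    congr 1
    funext ω
    by_cases hle : Y ω ≤ h
    · have hmem : Y ω / h ∈ Set.Icc (0:ℝ) 1 :=
        ⟨div_nonneg (hYnonneg ω) hpos.le, (div_le_one hpos).2 hle⟩
      have e : ({ω | Y ω ≤ h}.indicator (fun _ => K 1 ^ m)) ω = K 1 ^ m :=
        by simp [hle]
      rw [Set.indicator_of_mem hmem, e, hg]
      simp only [div_pow]
      field_simp
      ring
    · have hgt : 1 < Y ω / h := by rw [lt_div_iff₀ hpos]; push Not at hle; linarith
      have hmem : Y ω / h ∉ Set.Icc (0:ℝ) 1 := fun hh => absurd hh.2 (not_le.2 hgt)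
      have e : ({ω | Y ω ≤ h}.indicator (fun _ => K 1 ^ m)) ω = 0 :=
        by simp [not_le.1 hle]
      rw [Set.indicator_of_notMem hmem, e, hK_supp _ hgt, zero_pow (by omega)]
      simp
  rw [hI]
  field_simp
end

section
/- Let (q_i)_{i≥1} be a family of probability densities such that each q_i admits near 0 the Γ-representation q_i(u) = c_i · exp(−∫_u^{u₀} ds/ρ(s)) for 0 < u ≤ u₀, with constants c_i > 0 and a common function ρ that is positive, continuous and nondecreasing on (0, u₀] with ρ(s)/s → 0 as s → 0⁺. For p ∈ ℕ and t > 0 set J_p^{(i)}(t) = ∫₀¹ (xᵖ/√(1−x²)) · q_i(t√(1−x²)) dx. Then there exist M < ∞ and t₁ > 0 such that for all 0 < t < t₁ and all i, (J₂^{(i)}(t)/J₀^{(i)}(t)) · (t/ρ(t)) ≤ M. -/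
open MeasureTheory Filter Real Set

lemma aux_deriv (ρ : ℝ → ℝ) (u₀ : ℝ)
    (hρpos : ∀ s ∈ Set.Ioc (0:ℝ) u₀, 0 < ρ s)
    (hρcont : ContinuousOn ρ (Set.Ioc 0 u₀)) (u : ℝ) (hu : 0 < u) (hu' : u < u₀) :
    HasDerivAt (fun v => ∫ s in v..u₀, 1 / ρ s) (-(1 / ρ u)) u := by
  have hc : ContinuousOn (fun s => 1 / ρ s) (Set.Ioc 0 u₀) :=
    continuousOn_const.div hρcont (fun s hs => (hρpos s hs).ne')
  have hc' : ContinuousOn (fun s => 1 / ρ s) (Set.Ioo 0 u₀) := hc.mono Ioo_subset_Ioc_self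
  apply intervalIntegral.integral_hasDerivAt_left
  · apply ContinuousOn.intervalIntegrable
    apply hc.mono
    rw [uIcc_of_le hu'.le]
    intro s hs
    exact ⟨lt_of_lt_of_le hu hs.1, hs.2⟩
  · exact hc'.stronglyMeasurableAtFilter isOpen_Ioo u ⟨hu, hu'⟩
  · exact hc'.continuousAt (isOpen_Ioo.mem_nhds ⟨hu, hu'⟩)

lemma aux_main_s14 (q : ℝ → ℝ) (c : ℝ) (ρ : ℝ → ℝ) (u₀ : ℝ)
    (hc : 0 < c)
    (hρpos : ∀ s ∈ Set.Ioc (0:ℝ) u₀, 0 < ρ s)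
    (hρcont : ContinuousOn ρ (Set.Ioc 0 u₀))
    (hρmono : MonotoneOn ρ (Set.Ioc 0 u₀))
    (hrep : ∀ u ∈ Set.Ioc (0:ℝ) u₀, q u = c * Real.exp (-∫ s in u..u₀, 1 / ρ s))
    (t : ℝ) (ht : 0 < t) (htu : t < u₀)
    (h2 : IntervalIntegrable (fun x => x ^ 2 / √(1 - x^2) * q (t * √(1 - x^2))) volume 0 1)
    (h0 : IntervalIntegrable (fun x => (1:ℝ) / √(1 - x^2) * q (t * √(1 - x^2))) volume 0 1) :
    (∫ x in (0:ℝ)..1, x ^ 2 / √(1 - x^2) * q (t * √(1 - x^2))) ≤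
      ρ t / t * ∫ x in (0:ℝ)..1, (1:ℝ) / √(1 - x^2) * q (t * √(1 - x^2)) := by
  have hρt := hρpos t ⟨ht, htu.le⟩
  set φ : ℝ → ℝ := fun x => ρ t / t * ((1:ℝ) / √(1 - x^2) * q (t * √(1 - x^2))) -
    x ^ 2 / √(1 - x^2) * q (t * √(1 - x^2)) with hφ
  have hφi : IntervalIntegrable φ volume 0 1 := (h0.const_mul _).sub h2
  have hsub : ∀ x ∈ Ico (0:ℝ) 1, 0 < √(1 - x^2) ∧ √(1 - x^2) ≤ 1 := by
    intro x hx
    refine ⟨Real.sqrt_pos.2 (by nlinarith [hx.1, hx.2]), ?_⟩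
    exact Real.sqrt_le_iff.2 ⟨zero_le_one, by nlinarith [sq_nonneg x]⟩
  set Q : ℝ → ℝ := fun x => c * Real.exp (-∫ s in (t * √(1 - x^2))..u₀, 1 / ρ s) with hQ
  have hd : ∀ x ∈ Ico (0:ℝ) 1, HasDerivAt (fun x => ρ t / t * (x * Q x))
      (ρ t / t * (Q x - x * (Q x * (1 / ρ (t * √(1 - x^2)) * (t * (x / √(1 - x^2))))))) x := by
    intro x hx
    obtain ⟨hs0, hs1⟩ := hsub x hx
    have hs : HasDerivAt (fun x : ℝ => t * √(1 - x^2)) (t * (-(x / √(1 - x^2)))) x := by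
      have h1 : HasDerivAt (fun x : ℝ => 1 - x^2) (-(2 * x)) x := by
        simpa using (hasDerivAt_pow 2 x).const_sub 1
      have := (h1.sqrt (Real.sqrt_pos.1 hs0).ne').const_mul t
      refine this.congr_deriv ?_
      rw [neg_div, mul_div_mul_left _ _ two_ne_zero]
    have hF := (aux_deriv ρ u₀ hρpos hρcont (t * √(1 - x^2)) (by positivity)
      (by nlinarith)).comp x hs
    have hQd := (hF.neg.exp).const_mul c
    have := ((hasDerivAt_id x).mul hQd).const_mul (ρ t / t)
    refine this.congr_deriv ?_
    simp only [hQ, id, Function.comp, Pi.neg_apply]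
    ring
  have key : ∀ b ∈ Ico (0:ℝ) 1, 0 ≤ ∫ x in (0:ℝ)..b, φ x := by
    intro b hb
    have hI : IntegrableOn φ (Icc 0 b) := by
      rw [← intervalIntegrable_iff_integrableOn_Icc_of_le hb.1]
      apply hφi.mono_set
      rw [uIcc_of_le hb.1, uIcc_of_le zero_le_one]
      exact Icc_subset_Icc_right hb.2.le
    have := intervalIntegral.sub_le_integral_of_hasDeriv_right_of_le hb.1
      (fun x hx => (hd x ⟨hx.1, hx.2.trans_lt hb.2⟩).continuousAt.continuousWithinAt)
      (fun x hx => (hd x ⟨hx.1.le, hx.2.trans hb.2⟩).hasDerivWithinAt) hI ?_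
    · refine le_trans ?_ this
      have : 0 ≤ Q b := by positivity
      have hb0 := hb.1
      simp only [zero_mul, mul_zero, sub_zero]
      positivity
    · intro x hx
      have hx' : x ∈ Ico (0:ℝ) 1 := ⟨hx.1.le, hx.2.trans hb.2⟩
      obtain ⟨hs0, hs1⟩ := hsub x hx'
      have hu0 : 0 < t * √(1 - x^2) := by positivity
      have hu1 : t * √(1 - x^2) ≤ t := by nlinarith
      have hm : t * √(1 - x^2) ∈ Ioc 0 u₀ := ⟨hu0, hu1.trans htu.le⟩
      have hqQ : q (t * √(1 - x^2)) = Q x := hrep _ hm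
      have hQ0 : 0 ≤ Q x := by positivity
      have hρu := hρpos _ hm
      have hρle := hρmono hm ⟨ht, htu.le⟩ hu1
      simp only [hφ, hqQ]
      generalize ρ (t * √(1 - x^2)) = R at *
      generalize √(1 - x^2) = s at *
      have e1 : Q x ≤ 1 / s * Q x := by
        have : 1 ≤ 1 / s := by rw [le_div_iff₀ hs0]; linarith
        nlinarith
      have e2 : x ^ 2 / s * Q x ≤ ρ t / t * (x * (Q x * (1 / R * (t * (x / s))))) := by
        have : ρ t / t * (x * (Q x * (1 / R * (t * (x / s))))) = (ρ t / R) * (x ^ 2 / s * Q x) := by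
          field_simp
        rw [this]
        have h1 : 1 ≤ ρ t / R := by rw [le_div_iff₀ hρu]; linarith
        have h3 : 0 ≤ x ^ 2 / s * Q x := by positivity
        nlinarith
      have e3 := mul_le_mul_of_nonneg_left e1 (show 0 ≤ ρ t / t by positivity)
      rw [mul_sub]
      linarith
  have hcont : ContinuousOn (fun b => ∫ x in (0:ℝ)..b, φ x) (Icc 0 1) := by
    have := intervalIntegral.continuousOn_primitive_interval' hφi (left_mem_uIcc)
    rwa [uIcc_of_le zero_le_one] at this
  have hfin : 0 ≤ ∫ x in (0:ℝ)..1, φ x := by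
    have h1 : Tendsto (fun b => ∫ x in (0:ℝ)..b, φ x) (nhdsWithin 1 (Ico 0 1))
        (nhds (∫ x in (0:ℝ)..1, φ x)) :=
      (hcont 1 (right_mem_Icc.2 zero_le_one)).mono_left (nhdsWithin_mono _ Ico_subset_Icc_self)
    have : (nhdsWithin (1:ℝ) (Ico 0 1)).NeBot := by
      rw [← mem_closure_iff_nhdsWithin_neBot, closure_Ico zero_ne_one]
      exact right_mem_Icc.2 zero_le_one
    exact ge_of_tendsto h1 (eventually_mem_nhdsWithin.mono key)
  rw [hφ, intervalIntegral.integral_sub (h0.const_mul _) h2,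
    intervalIntegral.integral_const_mul] at hfin
  linarith

/-- Lemma `flo`: a uniform bound on `(J₂⁽ⁱ⁾(t)/J₀⁽ⁱ⁾(t))·(t/ρ(t))` for a
family of densities `q_i` admitting a common Γ-representation
`q_i(u) = c_i·exp(−∫_u^{u₀} ds/ρ(s))` near 0. -/
theorem stmt14 (q : ℕ → ℝ → ℝ) (c : ℕ → ℝ) (ρ : ℝ → ℝ) (u₀ : ℝ) (hu₀ : 0 < u₀)
    (hc : ∀ i, 0 < c i)
    (hρpos : ∀ s ∈ Set.Ioc (0:ℝ) u₀, 0 < ρ s)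
    (hρcont : ContinuousOn ρ (Set.Ioc 0 u₀))
    (hρmono : MonotoneOn ρ (Set.Ioc 0 u₀))
    (hρ0 : Tendsto (fun s => ρ s / s) (nhdsWithin 0 (Set.Ioi 0)) (nhds 0))
    (hq_nonneg : ∀ i u, 0 ≤ q i u)
    (hq_int : ∀ i, ∫ u, q i u = 1)
    (hrep : ∀ i, ∀ u ∈ Set.Ioc (0:ℝ) u₀,
      q i u = c i * Real.exp (-∫ s in u..u₀, 1 / ρ s)) :
    ∃ M : ℝ, ∃ t₁ > (0:ℝ), ∀ t : ℝ, 0 < t → t < t₁ → ∀ i : ℕ,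
      ((∫ x in (0:ℝ)..1, x ^ 2 / Real.sqrt (1 - x^2) * q i (t * Real.sqrt (1 - x^2))) /
        (∫ x in (0:ℝ)..1, (1:ℝ) / Real.sqrt (1 - x^2) * q i (t * Real.sqrt (1 - x^2)))) *
        (t / ρ t) ≤ M := by
  refine ⟨1, u₀, hu₀, fun t ht htu i => ?_⟩
  have hρt := hρpos t ⟨ht, htu.le⟩
  by_cases h2 : IntervalIntegrable
    (fun x => x ^ 2 / √(1 - x^2) * q i (t * √(1 - x^2))) volume 0 1
  swap
  · rw [intervalIntegral.integral_undef h2]; simp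
  by_cases h0 : IntervalIntegrable
    (fun x => (1:ℝ) / √(1 - x^2) * q i (t * √(1 - x^2))) volume 0 1
  swap
  · rw [intervalIntegral.integral_undef h0]; simp
  have hm := aux_main_s14 (q i) (c i) ρ u₀ (hc i) hρpos hρcont hρmono (hrep i) t ht htu h2 h0
  have hJ : 0 ≤ ∫ x in (0:ℝ)..1, (1:ℝ) / √(1 - x^2) * q i (t * √(1 - x^2)) := by
    apply intervalIntegral.integral_nonneg zero_le_one
    intro x _
    exact mul_nonneg (by positivity) (hq_nonneg i _)
  rcases hJ.eq_or_lt with h | h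
  · rw [← h]; simp
  · rw [div_mul_div_comm, div_le_one (by positivity)]
    rw [div_mul_eq_mul_div, le_div_iff₀ ht] at hm
    linarith
end

section
/- Let α > 0. Define, for θ > 0, μ(θ) = ∑_{i=1}^∞ 1/(e^{αi} + 2θ) and I(θ) = (1/2)∑_{i=1}^∞ log(1 + 2θ e^{−αi}) − θ·μ(θ). Then, as θ → ∞: (i) μ(θ) ∼ log(1 + 2θ e^{−α})/(2αθ); and (ii) I(θ) ∼ (1/(4α))·(log θ)², where ∼ means the ratio of the two sides tends to 1. -/
open Filter Real

lemma key_split (α : ℝ) (hα : 0 < α) (L : ℝ) (N : ℕ) (h1 : α * N ≤ L) (h2 : L < α * (N + 1))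
    (a b : ℕ → ℝ)
    (hb : ∀ i < N, |a i - b i| ≤ Real.exp (α * ((i:ℝ) + 1) - L))
    (ha0 : ∀ i, 0 ≤ a i)
    (ha : ∀ i, a i ≤ Real.exp (L - α * ((i:ℝ) + 1))) :
    |∑' i, a i - ∑ i ∈ Finset.range N, b i| ≤ 2 * ∑' i : ℕ, Real.exp (-α * i) := by
  have hs : Summable (fun i : ℕ => Real.exp (-α * i)) := by
    have := Real.summable_exp_nat_mul_iff.2 (neg_lt_zero.2 hα)
    exact this.congr (fun i => by rw [mul_comm])
  have hsa : Summable a := by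
    refine Summable.of_nonneg_of_le ha0 (fun i => ?_) (hs.mul_left (Real.exp (L - α)))
    refine (ha i).trans (le_of_eq ?_)
    rw [← Real.exp_add]; congr 1; ring
  rw [← hsa.sum_add_tsum_nat_add N]
  have ht0 : 0 ≤ ∑' i, a (i + N) := tsum_nonneg (fun i => ha0 _)
  have ht : ∑' i, a (i + N) ≤ ∑' i : ℕ, Real.exp (-α * i) := by
    refine Summable.tsum_le_tsum (fun i => ?_) ((summable_nat_add_iff N).2 hsa) hs
    refine (ha _).trans (Real.exp_le_exp.2 ?_)
    push_cast; nlinarith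
  have hh : |∑ i ∈ Finset.range N, a i - ∑ i ∈ Finset.range N, b i|
      ≤ ∑' i : ℕ, Real.exp (-α * i) := by
    rw [← Finset.sum_sub_distrib]
    refine (Finset.abs_sum_le_sum_abs _ _).trans ?_
    refine (Finset.sum_le_sum (fun i hi => hb i (Finset.mem_range.1 hi))).trans ?_
    rw [← Finset.sum_range_reflect]
    refine le_trans (Finset.sum_le_sum (fun j hj => ?_))
      (hs.sum_le_tsum (Finset.range N) (fun i _ => (Real.exp_pos _).le))
    have hj' := Finset.mem_range.1 hj
    refine Real.exp_le_exp.2 ?_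
    have : ((N - 1 - j : ℕ) : ℝ) = N - 1 - j := by
      rw [Nat.cast_sub (by omega), Nat.cast_sub (by omega)]; simp
    rw [this]; nlinarith
  rw [abs_le] at hh ⊢
  constructor <;> linarith [hh.1, hh.2]

lemma mu_bound (α : ℝ) (hα : 0 < α) (L : ℝ) (hL : 0 ≤ L) :
    |∑' i : ℕ, Real.exp L / (Real.exp (α * ((i:ℝ) + 1)) + Real.exp L) - L / α|
      ≤ 2 * (∑' i : ℕ, Real.exp (-α * i)) + 1 := by
  have hN1 := Nat.floor_le (div_nonneg hL hα.le)
  have hN2 := Nat.lt_floor_add_one (L / α)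
  set N := ⌊L / α⌋₊
  have h1 : α * N ≤ L := by rw [le_div_iff₀ hα] at hN1; linarith
  have h2 : L < α * (N + 1) := by rw [div_lt_iff₀ hα] at hN2; linarith
  have := key_split α hα L N h1 h2
    (fun i => Real.exp L / (Real.exp (α * ((i:ℝ) + 1)) + Real.exp L)) (fun _ => 1)
    (fun i _ => by
      have e1 := Real.exp_pos L
      have e2 := Real.exp_pos (α * ((i:ℝ) + 1))
      have : Real.exp L / (Real.exp (α * ((i:ℝ) + 1)) + Real.exp L) - 1
        = - (Real.exp (α * ((i:ℝ) + 1)) / (Real.exp (α * ((i:ℝ) + 1)) + Real.exp L)) := by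
        field_simp; ring
      simp only [this]
      rw [abs_neg, abs_of_nonneg (by positivity), Real.exp_sub]
      gcongr; linarith)
    (fun i => by positivity)
    (fun i => by
      have e2 := Real.exp_pos L
      simp only [Real.exp_sub]
      gcongr; linarith)
  simp only [Finset.sum_const, Finset.card_range, nsmul_eq_mul, mul_one] at this
  rw [abs_le] at this ⊢
  constructor <;> linarith [this.1, this.2]

lemma log_bound (α : ℝ) (hα : 0 < α) (L : ℝ) (hL : 0 ≤ L) :
    |∑' i : ℕ, Real.log (1 + Real.exp L * Real.exp (-α * ((i:ℝ) + 1))) - L ^ 2 / (2 * α)|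
      ≤ 2 * (∑' i : ℕ, Real.exp (-α * i)) + α / 2 + L / 2 := by
  have hN1 := Nat.floor_le (div_nonneg hL hα.le)
  have hN2 := Nat.lt_floor_add_one (L / α)
  set N := ⌊L / α⌋₊
  have h1 : α * N ≤ L := by rw [le_div_iff₀ hα] at hN1; linarith
  have h2 : L < α * (N + 1) := by rw [div_lt_iff₀ hα] at hN2; linarith
  have hexp : ∀ i : ℕ, Real.exp L * Real.exp (-α * ((i:ℝ) + 1))
      = Real.exp (L - α * ((i:ℝ) + 1)) := fun i => by
    rw [← Real.exp_add]; congr 1; ring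
  have hlog : ∀ y : ℝ, 0 ≤ Real.log (1 + Real.exp y) ∧ Real.log (1 + Real.exp y) ≤ Real.exp y := by
    intro y
    have := Real.exp_pos y
    refine ⟨Real.log_nonneg (by linarith), ?_⟩
    have := Real.log_le_sub_one_of_pos (x := 1 + Real.exp y) (by positivity)
    linarith
  have := key_split α hα L N h1 h2
    (fun i => Real.log (1 + Real.exp L * Real.exp (-α * ((i:ℝ) + 1))))
    (fun i => L - α * ((i:ℝ) + 1))
    (fun i _ => by
      simp only [hexp]
      have : Real.log (1 + Real.exp (L - α * ((i:ℝ) + 1))) - (L - α * ((i:ℝ) + 1))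
        = Real.log (1 + Real.exp (α * ((i:ℝ) + 1) - L)) := by
        have hy : 1 + Real.exp (L - α * ((i:ℝ) + 1)) = Real.exp (L - α * ((i:ℝ) + 1)) *
          (1 + Real.exp (α * ((i:ℝ) + 1) - L)) := by
          rw [mul_add _ 1, ← Real.exp_add]; simp [add_comm]
        rw [hy, Real.log_mul (by positivity) (by positivity), Real.log_exp]; ring
      rw [this, abs_of_nonneg (hlog _).1]
      exact (hlog _).2)
    (fun i => by simp only [hexp]; exact (hlog _).1)
    (fun i => by simp only [hexp]; exact (hlog _).2)
  have hsum : ∀ n : ℕ, ∑ i ∈ Finset.range n, (L - α * ((i:ℝ) + 1))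
      = n * L - α * n * (n + 1) / 2 := by
    intro n
    induction n with
    | zero => simp
    | succ k ih => rw [Finset.sum_range_succ, ih]; push_cast; ring
  rw [hsum] at this
  obtain ⟨r, hr⟩ : ∃ r, r = L - α * N := ⟨_, rfl⟩
  have hd : (N:ℝ) * L - α * N * (N + 1) / 2 - L ^ 2 / (2 * α)
     = -(α * N / 2) - r ^ 2 / (2 * α) := by
    rw [hr]; field_simp; ring
  have hr2 : r ^ 2 / (2 * α) ≤ α / 2 := by
    rw [div_le_iff₀ (by positivity)]
    have : 0 ≤ r := by linarith
    have : r ≤ α := by linarith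
    nlinarith
  have hr3 : 0 ≤ r ^ 2 / (2 * α) := by positivity
  have hp : 0 ≤ α * N := by positivity
  rw [abs_le] at *
  constructor <;> linarith [this.1, this.2]

lemma equiv_of_bound (u v w : ℝ → ℝ) (K : ℝ) (h : ∀ᶠ x in atTop, |u x - v x| ≤ K * |w x|)
    (hw : w =o[atTop] v) : Asymptotics.IsEquivalent atTop u v := by
  refine Asymptotics.IsBigO.trans_isLittleO (Asymptotics.IsBigO.of_bound K ?_) hw
  simpa using h

/-- computations in the proof of Proposition `Juliet`: with
`μ(θ) = ∑_{i≥1} 1/(e^{αi}+2θ)` and `I(θ) = (1/2)∑_{i≥1} log(1+2θe^{−αi}) − θμ(θ)`,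
one has `μ(θ) ∼ log(1+2θe^{−α})/(2αθ)` and `I(θ) ∼ (log θ)²/(4α)` as `θ → ∞`. -/
theorem stmt18 (α : ℝ) (hα : 0 < α) (μ I : ℝ → ℝ)
    (hμ : ∀ θ, μ θ = ∑' i : ℕ, 1 / (Real.exp (α * ((i:ℝ) + 1)) + 2 * θ))
    (hI : ∀ θ, I θ = (1/2) * (∑' i : ℕ, Real.log (1 + 2 * θ * Real.exp (-α * ((i:ℝ) + 1))))
        - θ * μ θ) :
    Tendsto (fun θ => μ θ / (Real.log (1 + 2 * θ * Real.exp (-α)) / (2 * α * θ)))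
      atTop (nhds 1) ∧
    Tendsto (fun θ => I θ / ((1 / (4 * α)) * (Real.log θ) ^ 2)) atTop (nhds 1) := by
  obtain ⟨C, hC⟩ : ∃ C, C = ∑' i : ℕ, Real.exp (-α * i) := ⟨_, rfl⟩
  have hC0 : 0 ≤ C := hC ▸ tsum_nonneg (fun i => (Real.exp_pos _).le)
  have hmu : ∀ θ : ℝ, 1 ≤ θ → |2 * θ * μ θ - Real.log (2 * θ) / α| ≤ 2 * C + 1 := by
    intro θ hθ
    have := mu_bound α hα (Real.log (2 * θ)) (Real.log_nonneg (by linarith))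
    rw [Real.exp_log (by linarith), ← hC] at this
    rw [hμ, ← tsum_mul_left]
    simpa only [mul_one_div] using this
  have hIb : ∀ θ : ℝ, 1 ≤ θ → |I θ - Real.log (2 * θ) ^ 2 / (4 * α)|
      ≤ 2 * C + 1 + α + (1 + 1 / α) * Real.log (2 * θ) := by
    intro θ hθ
    have hL0 : 0 ≤ Real.log (2 * θ) := Real.log_nonneg (by linarith)
    have h1 := log_bound α hα (Real.log (2 * θ)) hL0
    rw [Real.exp_log (by linarith), ← hC] at h1
    have h2 := hmu θ hθ
    rw [hI]
    have e1 : Real.log (2 * θ) ^ 2 / (4 * α) = Real.log (2 * θ) ^ 2 / (2 * α) / 2 := by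
      rw [div_div]; congr 1; ring
    have e2 : (1 + 1 / α) * Real.log (2 * θ) = Real.log (2 * θ) + Real.log (2 * θ) / α := by
      ring
    have e3 : 0 ≤ Real.log (2 * θ) / α := by positivity
    rw [e1, e2]
    rw [abs_le] at *
    constructor <;> linarith [h1.1, h1.2, h2.1, h2.2]
  have hLt : Tendsto (fun θ : ℝ => Real.log (2 * θ)) atTop atTop :=
    Real.tendsto_log_atTop.comp (tendsto_id.const_mul_atTop (by norm_num))
  have ho1 : (fun _ : ℝ => (1:ℝ)) =o[atTop] (fun θ : ℝ => Real.log (2 * θ)) := by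
    rw [Asymptotics.isLittleO_const_left]
    right
    exact tendsto_norm_atTop_atTop.comp hLt
  have hE1 : Asymptotics.IsEquivalent atTop (fun θ => 2 * θ * μ θ * α)
      (fun θ : ℝ => Real.log (2 * θ)) := by
    refine equiv_of_bound _ _ (fun _ => 1) ((2 * C + 1) * α) ?_ ho1
    filter_upwards [eventually_ge_atTop 1] with θ hθ
    have : 2 * θ * μ θ * α - Real.log (2 * θ) = (2 * θ * μ θ - Real.log (2 * θ) / α) * α := by
      field_simp
    rw [this, abs_mul, abs_of_pos hα, abs_one, mul_one]
    exact mul_le_mul_of_nonneg_right (hmu θ hθ) hα.le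
  have hE2 : Asymptotics.IsEquivalent atTop (fun θ => Real.log (1 + 2 * θ * Real.exp (-α)))
      (fun θ : ℝ => Real.log (2 * θ)) := by
    refine equiv_of_bound _ _ (fun _ => 1) (1 + α) ?_ ho1
    filter_upwards [eventually_ge_atTop 1, eventually_ge_atTop (Real.exp α)] with θ hθ hθ2
    have hx : 1 ≤ 2 * θ * Real.exp (-α) := by
      have : Real.exp α * Real.exp (-α) = 1 := by rw [← Real.exp_add]; simp
      nlinarith [Real.exp_pos (-α)]
    have hl : Real.log (2 * θ * Real.exp (-α)) = Real.log (2 * θ) - α := by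
      rw [Real.log_mul (by positivity) (by positivity), Real.log_exp]; ring
    have h1 := Real.log_le_log (by linarith) (show 2 * θ * Real.exp (-α)
      ≤ 1 + 2 * θ * Real.exp (-α) by linarith)
    have h2 := Real.log_le_log (by linarith) (show 1 + 2 * θ * Real.exp (-α)
      ≤ 2 * (2 * θ * Real.exp (-α)) by linarith)
    rw [Real.log_mul (by norm_num) (by positivity)] at h2
    have := Real.log_two_lt_d9
    rw [hl] at h1 h2
    rw [abs_one, mul_one, abs_le]
    constructor <;> linarith
  have hE3 : Asymptotics.IsEquivalent atTop (fun θ => Real.log θ)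
      (fun θ : ℝ => Real.log (2 * θ)) := by
    refine equiv_of_bound _ _ (fun _ => 1) 1 ?_ ho1
    filter_upwards [eventually_ge_atTop 1] with θ hθ
    rw [Real.log_mul (by norm_num) (by positivity), abs_one, abs_le]
    have := Real.log_two_lt_d9
    have := Real.log_two_gt_d9
    constructor <;> linarith
  have hE4 : Asymptotics.IsEquivalent atTop (fun θ => I θ * (4 * α))
      (fun θ : ℝ => Real.log (2 * θ) ^ 2) := by
    refine equiv_of_bound _ _ (fun θ => Real.log (2 * θ))
      ((2 * C + 1 + α + (1 + 1 / α)) * (4 * α)) ?_ ?_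
    · filter_upwards [eventually_ge_atTop 1, hLt.eventually_ge_atTop 1] with θ hθ hL
      have : I θ * (4 * α) - Real.log (2 * θ) ^ 2
        = (I θ - Real.log (2 * θ) ^ 2 / (4 * α)) * (4 * α) := by
        field_simp
      rw [this, abs_mul, abs_of_pos (show 0 < 4 * α by positivity),
        abs_of_nonneg (show 0 ≤ Real.log (2 * θ) by linarith), mul_right_comm]
      refine mul_le_mul_of_nonneg_right ((hIb θ hθ).trans ?_) (by positivity)
      have : 0 ≤ (2 * C + 1 + α) * (Real.log (2 * θ) - 1) :=
        mul_nonneg (by positivity) (by linarith)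
      linarith
    · have := ho1.mul_isBigO (Asymptotics.isBigO_refl (fun θ : ℝ => Real.log (2 * θ)) atTop)
      simpa [pow_two] using this
  constructor
  · have hne : ∀ᶠ θ : ℝ in atTop, Real.log (1 + 2 * θ * Real.exp (-α)) ≠ 0 := by
      filter_upwards [eventually_gt_atTop 0] with θ hθ
      refine (Real.log_pos ?_).ne'
      have := Real.exp_pos (-α)
      have : 0 < 2 * θ * Real.exp (-α) := by positivity
      linarith
    have := (Asymptotics.isEquivalent_iff_tendsto_one hne).1 (hE1.trans hE2.symm)
    refine this.congr' ?_
    filter_upwards [eventually_gt_atTop 0, hne] with θ hθ h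
    simp only [Pi.div_apply]
    field_simp
  · have hne : ∀ᶠ θ : ℝ in atTop, Real.log θ ^ 2 ≠ 0 := by
      filter_upwards [eventually_gt_atTop 1] with θ hθ
      exact pow_ne_zero _ (Real.log_pos hθ).ne'
    have := (Asymptotics.isEquivalent_iff_tendsto_one hne).1 (hE4.trans (hE3.pow 2).symm)
    refine this.congr' ?_
    filter_upwards [eventually_gt_atTop 0, hne] with θ hθ h
    simp only [Pi.div_apply]
    field_simp
end
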